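/- arXiv:0907.4216 — 2 statements merged into one kernel-verified Lean document; each statement's English description precedes it below -/
import Mathlib

section
/- Lemma (Meyer-type square function estimate, part (a)): Let 0 < p1,p2,p3 < ∞ with 1/p1+1/p2+1/p3 = 1, let D̃ ⊆ Γ be measurable, and suppose there is a constant C with |Λ_{D̃}(f1,f2,f3)| ≤ C ‖f1‖_{L^{p1}} ‖f2‖_{L^{p2}} ‖f3‖_{L^{p3}} for all Schwartz f1,f2,f3 on ℝ². Let ξ⃗¹,…,ξ⃗^N ∈ ∂D̃ and v⃗¹,…,v⃗^N ∈ Γ be such that each v⃗ⁿ is normal to ∂D̃ at ξ⃗ⁿ in the blow-up sense. Then there is a constant C′ depending only on C and (p1,p2,p3) (not on N nor on the ξ⃗ⁿ, v⃗ⁿ) such that Σ_{n=1}^N |Λ̃_{v⃗ⁿ}(f1ⁿ,f2ⁿ,f3ⁿ)| ≤ C′ ∏_{j=1}^3 ‖(Σ_{n=1}^N |f_jⁿ|²)^{1/2}‖_{L^{p_j}} for all bounded compactly supported measurable functions f_jⁿ (1 ≤ j ≤ 3, 1 ≤ n ≤ N) on ℝ² for which each principal-value limit defining Λ̃_{v⃗ⁿ}(f1ⁿ,f2ⁿ,f3ⁿ)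 exists. -/
open MeasureTheory Filter Topology Set

noncomputable section

abbrev V2 : Type := ℝ × ℝ
abbrev Amb : Type := V2 × V2 × V2

def dot2 (x y : V2) : ℝ := x.1 * y.1 + x.2 * y.2

def dot6 (x y : Amb) : ℝ := dot2 x.1 y.1 + dot2 x.2.1 y.2.1 + dot2 x.2.2 y.2.2

def Gamma : Set Amb := {x | x.1 + x.2.1 + x.2.2 = 0}

def Phi (x : V2 × V2) : Amb := (x.1, x.2, -(x.1 + x.2))

def FT (f : V2 → ℂ) (ξ : V2) : ℂ :=
  ∫ x : V2, Complex.exp (-(2 * Real.pi * dot2 x ξ) * Complex.I) * f x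

def LambdaIntegrand (Dt : Set Amb) (f1 f2 f3 : V2 → ℂ) (ξ : V2 × V2) : ℂ :=
  Set.indicator Dt (fun _ => (1 : ℂ)) (Phi ξ) *
    (FT f1 ξ.1 * (FT f2 ξ.2 * FT f3 (-(ξ.1 + ξ.2))))

def Lambda (Dt : Set Amb) (f1 f2 f3 : V2 → ℂ) : ℂ :=
  ∫ ξ : V2 × V2, LambdaIntegrand Dt f1 f2 f3 ξ

def OfType (Lam : (V2 → ℂ) → (V2 → ℂ) → (V2 → ℂ) → ℂ) (p1 p2 p3 : ℝ) : Prop :=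
  ∃ C : ℝ, ∀ f1 f2 f3 : SchwartzMap V2 ℂ,
    ENNReal.ofReal ‖Lam ⇑f1 ⇑f2 ⇑f3‖ ≤ ENNReal.ofReal C *
      (eLpNorm (⇑f1) (ENNReal.ofReal p1) volume *
        (eLpNorm (⇑f2) (ENNReal.ofReal p2) volume *
          eLpNorm (⇑f3) (ENNReal.ofReal p3) volume))

def bdry (Dt : Set Amb) : Set Amb := Phi '' frontier (Phi ⁻¹' Dt)

def comp3 (x : Amb) : Fin 3 → V2 := ![x.1, x.2.1, x.2.2]

def IsSmoothHypersurface (M : Set (V2 × V2)) : Prop :=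
  ∀ p ∈ M, ∃ (W : Set (V2 × V2)) (g : V2 × V2 → ℝ),
    IsOpen W ∧ p ∈ W ∧ ContDiffOn ℝ (⊤ : ℕ∞) g W ∧
    (∀ x ∈ W, fderiv ℝ g x ≠ 0) ∧ M ∩ W = {x ∈ W | g x = 0}

def SliceCurvature (Dt : Set Amb) (j : Fin 3) : Prop :=
  ∃ U : Set Amb, U ⊆ Gamma ∧ IsOpen (Phi ⁻¹' U) ∧
    IsSmoothHypersurface (Phi ⁻¹' (bdry Dt ∩ U)) ∧
    IsConnected (Phi ⁻¹' (bdry Dt ∩ U)) ∧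
    ∃ (ξ0 : V2) (γ : ℝ → Amb) (t0 ε : ℝ), 0 < ε ∧
      ContDiffOn ℝ 2 γ (Set.Ioo (t0 - ε) (t0 + ε)) ∧
      (∀ t ∈ Set.Ioo (t0 - ε) (t0 + ε), γ t ∈ bdry Dt ∩ U ∧ comp3 (γ t) j = ξ0) ∧
      (∀ t ∈ Set.Ioo (t0 - ε) (t0 + ε), deriv γ t ≠ 0) ∧
      LinearIndependent ℝ ![deriv γ t0, deriv (deriv γ) t0]

def Pv (v : Amb) : Set Amb := {ξ | ξ ∈ Gamma ∧ 0 < dot6 ξ v}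

def blowSet (Dt : Set Amb) (ξ : Amb) (r : ℝ) : Set Amb := (fun y => r • (y - ξ)) '' Dt

def BlowupNormal (Dt : Set Amb) (ξ v : Amb) : Prop :=
  ∀ᵐ x : V2 × V2, Filter.Tendsto
    (fun r : ℝ => Set.indicator (blowSet Dt ξ r) (fun _ => (1 : ℝ)) (Phi x))
    Filter.atTop (𝓝 (Set.indicator (Pv v) (fun _ => (1 : ℝ)) (Phi x)))

def truncPV (v : Amb) (f1 f2 f3 : V2 → ℂ) (δ : ℝ) : ℂ :=
  ∫ t in {t : ℝ | δ < |t| ∧ |t| < δ⁻¹},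
    (∫ x : V2, f1 (x - t • v.1) * (f2 (x - t • v.2.1) * f3 (x - t • v.2.2))) / (t : ℂ)

def HasPV (v : Amb) (f1 f2 f3 : V2 → ℂ) (L : ℂ) : Prop :=
  Filter.Tendsto (truncPV v f1 f2 f3) (𝓝[>] (0 : ℝ)) (𝓝 L)

/-!
Random signs: replacing `f₁ⁿ, f₂ⁿ, f₃ⁿ` by `∑ εₙ f₁ⁿ, ∑ ηₙ f₂ⁿ, ∑ εₙ ηₙ f₃ⁿ` in a bounded trilinear
form and averaging leaves only the diagonal terms, while Khinchin's inequality and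
`1/p₁ + 1/p₂ + 1/p₃ = 1` turn the right-hand side into a product of square functions. This gives the
`ℓ²`-valued estimate for `N` copies of `Λ_D̃`, and that estimate, unlike the hypothesis on `Λ_D̃`,
allows a different symmetry in each slot `n`. Modulations translate `D̃` so that `ξ⃗ⁿ` moves to the
origin, and dilations then blow it up to the half-space with normal `v⃗ⁿ`.

The multiplier of `Λ̃_v` is a multiple of the sign of `ξ⃗ · v⃗`. Replacing `1 / t` by a difference
of Cauchy bumps divided by `t` smooths that sign into a superposition, with integrable density, of
translates of the half-space, which are again modulations of the half-space form. Since these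
smooth truncations are averages of the sharp ones with weights concentrating at `0`, they converge
to the same principal value.
-/

open scoped ENNReal FourierTransform Pointwise SchwartzMap

section Khinchin

variable {ι : Type*} [Fintype ι]

lemma rpow_le_mul_exp {p x : ℝ} (hp : 0 < p) (hx : 0 ≤ x) : x ^ p ≤ p ^ p * Real.exp x := by
  have h : x / p ≤ Real.exp (x / p) := by linarith [Real.add_one_le_exp (x / p)]
  have hpow := Real.rpow_le_rpow (by positivity) h hp.le
  rwa [← Real.exp_mul, div_mul_cancel₀ _ hp.ne', Real.div_rpow hx hp.le,
    div_le_iff₀' (by positivity)] at hpow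

lemma exp_abs_le_exp_add_exp_neg (x : ℝ) : Real.exp |x| ≤ Real.exp x + Real.exp (-x) := by
  rcases abs_choice x with h | h <;> rw [h] <;> linarith [Real.exp_pos x, Real.exp_pos (-x)]

lemma exp_norm_le_exp_re_add_exp_im (z : ℂ) :
    Real.exp ‖z‖ ≤ Real.exp (2 * z.re) + Real.exp (-(2 * z.re)) +
      (Real.exp (2 * z.im) + Real.exp (-(2 * z.im))) := by
  have hre := exp_abs_le_exp_add_exp_neg (2 * z.re)
  have him := exp_abs_le_exp_add_exp_neg (2 * z.im)
  have hmax : ‖z‖ ≤ max |2 * z.re| |2 * z.im| := by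
    simp only [abs_mul, Nat.abs_ofNat]
    rcases le_total |z.re| |z.im| with h | h <;>
      simp only [h, max_eq_left, max_eq_right, mul_le_mul_iff_right₀, Nat.ofNat_pos] <;>
      linarith [Complex.norm_le_abs_re_add_abs_im z]
  refine (Real.exp_le_exp.2 hmax).trans ?_
  rw [Real.exp_monotone.map_max]
  refine max_le ?_ ?_ <;> linarith [Real.exp_pos |2 * z.re|, Real.exp_pos |2 * z.im|]

variable [DecidableEq ι]

lemma sum_exp_sum_signs_smul_le (a : ι → ℝ) :
    ∑ ε : ι → ℤˣ, Real.exp (∑ n, ε n • a n) ≤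
      2 ^ Fintype.card ι * Real.exp ((∑ n, a n ^ 2) / 2) := by
  have hcosh (x : ℝ) : ∑ s : ℤˣ, Real.exp (s • x) = 2 * Real.cosh x := by
    rw [UnitsInt.univ, Finset.sum_pair (by decide), Real.cosh_eq, one_smul,
      Units.neg_smul, one_smul]
    ring
  calc ∑ ε : ι → ℤˣ, Real.exp (∑ n, ε n • a n)
      = ∏ n, 2 * Real.cosh (a n) := by
        simp only [Real.exp_sum, ← hcosh, Finset.prod_univ_sum, Fintype.piFinset_univ]
    _ ≤ ∏ n, 2 * Real.exp (a n ^ 2 / 2) :=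
        Finset.prod_le_prod (fun n _ => by have := Real.cosh_pos (a n); positivity) fun n _ => by
          gcongr; exact Real.cosh_le_exp_half_sq _
    _ = 2 ^ Fintype.card ι * Real.exp ((∑ n, a n ^ 2) / 2) := by
        rw [Finset.prod_mul_distrib, Finset.sum_div, Real.exp_sum, Finset.prod_const,
          Finset.card_univ]

lemma sum_exp_apply_sum_signs_smul_le {E : Type*} [SeminormedAddCommGroup E] [NormedSpace ℝ E]
    (L : E →L[ℝ] ℝ) (z : ι → E) :
    ∑ ε : ι → ℤˣ, Real.exp (L (∑ n, ε n • z n)) ≤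
      2 ^ Fintype.card ι * Real.exp (‖L‖ ^ 2 * (∑ n, ‖z n‖ ^ 2) / 2) := by
  have hL (ε : ι → ℤˣ) : L (∑ n, ε n • z n) = ∑ n, ε n • L (z n) := by
    simp only [map_sum, Units.smul_def, map_zsmul]
  simp only [hL]
  refine (sum_exp_sum_signs_smul_le fun n => L (z n)).trans ?_
  gcongr
  rw [Finset.mul_sum]
  gcongr with n
  rw [← mul_pow, sq_le_sq, abs_of_nonneg (by positivity : 0 ≤ ‖L‖ * ‖z n‖)]
  exact L.le_opNorm _

lemma sum_exp_norm_sum_signs_smul_le (z : ι → ℂ) :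
    ∑ ε : ι → ℤˣ, Real.exp ‖∑ n, ε n • z n‖ ≤
      2 ^ Fintype.card ι * (4 * Real.exp (2 * ∑ n, ‖z n‖ ^ 2)) := by
  have hbound (L : ℂ →L[ℝ] ℝ) (hL : ‖L‖ = 2) :
      ∑ ε : ι → ℤˣ, Real.exp (L (∑ n, ε n • z n)) ≤
        2 ^ Fintype.card ι * Real.exp (2 * ∑ n, ‖z n‖ ^ 2) := by
    convert sum_exp_apply_sum_signs_smul_le L z using 3
    rw [hL]; ring
  have hre := hbound ((2 : ℝ) • Complex.reCLM) (by simp [norm_smul])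
  have hre' := hbound (-((2 : ℝ) • Complex.reCLM)) (by simp [norm_smul])
  have him := hbound ((2 : ℝ) • Complex.imCLM) (by simp [norm_smul])
  have him' := hbound (-((2 : ℝ) • Complex.imCLM)) (by simp [norm_smul])
  refine (Finset.sum_le_sum fun ε _ => exp_norm_le_exp_re_add_exp_im _).trans ?_
  simp only [neg_apply, smul_apply, Complex.reCLM_apply,
    Complex.imCLM_apply, smul_eq_mul] at hre hre' him him'
  simp only [Finset.sum_add_distrib]
  linarith

/-- The constant of Khinchin's inequality with exponent `p`, obtained from
`x ^ p ≤ p ^ p * exp x` and subgaussian exponential moments. -/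
def khinchinConst (p : ℝ) : ℝ := p ^ p * (4 * Real.exp 2)

lemma khinchinConst_pos {p : ℝ} (hp : 0 < p) : 0 < khinchinConst p := by
  unfold khinchinConst; positivity

lemma sum_norm_sum_signs_smul_rpow_le_of_sum_sq_le_one {p : ℝ} (hp : 0 < p) {z : ι → ℂ}
    (hz : ∑ n, ‖z n‖ ^ 2 ≤ 1) :
    ∑ ε : ι → ℤˣ, ‖∑ n, ε n • z n‖ ^ p ≤ 2 ^ Fintype.card ι * khinchinConst p :=
  calc ∑ ε : ι → ℤˣ, ‖∑ n, ε n • z n‖ ^ p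
      ≤ p ^ p * ∑ ε : ι → ℤˣ, Real.exp ‖∑ n, ε n • z n‖ := by
        rw [Finset.mul_sum]
        gcongr with ε
        exact rpow_le_mul_exp hp (norm_nonneg _)
    _ ≤ p ^ p * (2 ^ Fintype.card ι * (4 * Real.exp (2 * 1))) := by
        gcongr
        exact (sum_exp_norm_sum_signs_smul_le z).trans (by gcongr)
    _ = 2 ^ Fintype.card ι * khinchinConst p := by rw [khinchinConst]; ring_nf

theorem khinchin_inequality {p : ℝ} (hp : 0 < p) (z : ι → ℂ) :
    ∑ ε : ι → ℤˣ, ‖∑ n, ε n • z n‖ ^ p ≤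
      2 ^ Fintype.card ι * khinchinConst p * √(∑ n, ‖z n‖ ^ 2) ^ p := by
  set σ := √(∑ n, ‖z n‖ ^ 2)
  have hσ2 : σ ^ 2 = ∑ n, ‖z n‖ ^ 2 := Real.sq_sqrt (by positivity)
  have hK := (khinchinConst_pos hp).le
  rcases (Real.sqrt_nonneg (∑ n, ‖z n‖ ^ 2)).eq_or_lt' with h0 | h0
  · have hz (n : ι) : z n = 0 := by
      rw [Real.sqrt_eq_zero (by positivity),
        Finset.sum_eq_zero_iff_of_nonneg fun n _ => by positivity] at h0
      simpa using h0 n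
    simp only [hz, smul_zero, Finset.sum_const_zero, norm_zero, Real.zero_rpow hp.ne']
    positivity
  · have hσ0 : 0 < σ := h0
    have hunit : ∑ n, ‖σ⁻¹ • z n‖ ^ 2 ≤ 1 := by
      simp only [norm_smul, mul_pow, ← Finset.mul_sum, ← hσ2]
      simp [hσ0.ne']
    have h := sum_norm_sum_signs_smul_rpow_le_of_sum_sq_le_one hp hunit
    simp only [smul_comm _ σ⁻¹, ← Finset.smul_sum, norm_smul, norm_inv,
      Real.norm_of_nonneg hσ0.le, Real.mul_rpow (inv_nonneg.2 hσ0.le) (norm_nonneg _),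
      Real.inv_rpow hσ0.le, ← Finset.mul_sum] at h
    rwa [inv_mul_le_iff₀' (by positivity)] at h

end Khinchin

section SquareFunction

variable {ι α E : Type*} [Fintype ι] [NormedAddCommGroup E]

/-- The pointwise `ℓ²` norm of a finite family of functions: the square function
`(∑ |fⁿ|²)^{1/2}` of the theorem. -/
def sqFun (f : ι → α → E) (x : α) : ℝ := √(∑ n, ‖f n x‖ ^ 2)

lemma sqFun_nonneg (f : ι → α → E) (x : α) : 0 ≤ sqFun f x := Real.sqrt_nonneg _

variable [MeasurableSpace α] {μ : Measure α} {p : ℝ}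

lemma eLpNorm_ofReal_eq_lintegral_rpow (hp : 0 < p) (f : α → E) :
    eLpNorm f (ENNReal.ofReal p) μ = (∫⁻ x, ‖f x‖ₑ ^ p ∂μ) ^ p⁻¹ := by
  rw [eLpNorm_eq_lintegral_rpow_enorm_toReal (by simpa using hp) ENNReal.ofReal_ne_top,
    ENNReal.toReal_ofReal hp.le, one_div]

lemma eLpNorm_sqFun_mul_le (c : ι → ℂ) (hc : ∀ n, ‖c n‖ ≤ 1) (f : ι → α → ℂ) (q : ℝ≥0∞) :
    eLpNorm (sqFun fun n x => c n * f n x) q μ ≤ eLpNorm (sqFun f) q μ := by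
  refine eLpNorm_mono fun x => ?_
  rw [Real.norm_of_nonneg (sqFun_nonneg _ x), Real.norm_of_nonneg (sqFun_nonneg _ x)]
  refine Real.sqrt_le_sqrt (Finset.sum_le_sum fun n _ => ?_)
  rw [norm_mul]
  gcongr
  exact mul_le_of_le_one_left (norm_nonneg _) (hc n)

lemma lintegral_enorm_sum_signs_smul_rpow_le [DecidableEq ι] (hp : 0 < p) {f : ι → α → ℂ}
    (hf : ∀ n, Measurable (f n)) :
    ∑ ε : ι → ℤˣ, ∫⁻ x, ‖∑ n, ε n • f n x‖ₑ ^ p ∂μ ≤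
      2 ^ Fintype.card ι * ENNReal.ofReal (khinchinConst p) * ∫⁻ x, ‖sqFun f x‖ₑ ^ p ∂μ := by
  rw [← lintegral_finsetSum _ fun ε _ => by simp only [Units.smul_def]; fun_prop,
    ← lintegral_const_mul' _ _ (by finiteness)]
  refine lintegral_mono fun x => ?_
  have h := ENNReal.ofReal_le_ofReal (khinchin_inequality hp fun n => f n x)
  rw [ENNReal.ofReal_sum_of_nonneg fun ε _ => by positivity,
    ENNReal.ofReal_mul (by have := khinchinConst_pos hp; positivity),
    ENNReal.ofReal_mul (by positivity), ENNReal.ofReal_pow (by norm_num),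
    ENNReal.ofReal_ofNat] at h
  simpa only [← ENNReal.ofReal_rpow_of_nonneg (norm_nonneg _) hp.le, ofReal_norm,
    ← ENNReal.ofReal_rpow_of_nonneg (Real.sqrt_nonneg _) hp.le, sqFun,
    Real.enorm_of_nonneg (Real.sqrt_nonneg _)] using h

end SquareFunction

section Randomization

variable {ι : Type*}

/-- The signs `(ε, η, εη)` attached to the three slots of a trilinear form. Their product is
`1`, so averaging over independent `ε` and `η` kills exactly the off-diagonal terms. -/
def tripleSign (ω : (ι → ℤˣ) × (ι → ℤˣ)) : Fin 3 → ι → ℤˣ := ![ω.1, ω.2, ω.1 * ω.2]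

variable [Fintype ι] [DecidableEq ι]

lemma sum_signs_mul_eq (n m : ι) :
    ∑ ε : ι → ℤˣ, ((ε n * ε m : ℤˣ) : ℤ) = if n = m then 2 ^ Fintype.card ι else 0 := by
  split_ifs with h
  · subst h
    simp [Int.units_mul_self]
  · -- Flipping the sign of the `n`-th entry changes the sign of the sum.
    have hflip := Equiv.sum_comp (Equiv.mulRight (Function.update (1 : ι → ℤˣ) n (-1)))
      fun ε : ι → ℤˣ => ((ε n * ε m : ℤˣ) : ℤ)
    simp only [Equiv.coe_mulRight, Pi.mul_apply, Function.update_self,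
      Function.update_of_ne (Ne.symm h), Pi.one_apply, mul_one, mul_neg, neg_mul, Units.val_neg,
      Finset.sum_neg_distrib] at hflip
    lia

lemma sum_comp_tripleSign {M : Type*} [AddCommMonoid M] (j : Fin 3) (φ : (ι → ℤˣ) → M) :
    ∑ ω, φ (tripleSign ω j) = 2 ^ Fintype.card ι • ∑ ε, φ ε := by
  rw [Fintype.sum_prod_type]
  fin_cases j
  · simp [tripleSign, Finset.smul_sum]
  · simp [tripleSign]
  · have hshift (ε : ι → ℤˣ) : ∑ η, φ (ε * η) = ∑ η, φ η := Equiv.sum_comp (Equiv.mulLeft ε) φ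
    simp [tripleSign, hshift]

lemma sum_prod_tripleSign (r : Fin 3 → ι) :
    ∑ ω, ∏ j, (tripleSign ω j (r j) : ℤ) =
      if r 0 = r 2 ∧ r 1 = r 2 then 4 ^ Fintype.card ι else 0 := by
  have hfactor : ∑ ω, ∏ j, (tripleSign ω j (r j) : ℤ) =
      (∑ ε : ι → ℤˣ, ((ε (r 0) * ε (r 2) : ℤˣ) : ℤ)) *
        ∑ η : ι → ℤˣ, ((η (r 1) * η (r 2) : ℤˣ) : ℤ) := by
    rw [Finset.sum_mul_sum, Fintype.sum_prod_type]
    refine Finset.sum_congr rfl fun ε _ => Finset.sum_congr rfl fun η _ => ?_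
    simp only [Fin.prod_univ_three, tripleSign, Matrix.cons_val, Pi.mul_apply, Units.val_mul]
    ring
  rw [hfactor, sum_signs_mul_eq, sum_signs_mul_eq, ite_zero_mul_ite_zero, ← mul_pow]
  norm_num

lemma sum_map_tripleSign {V F : Type*} [AddCommGroup V] [AddCommGroup F]
    (T : MultilinearMap ℤ (fun _ : Fin 3 => V) F) (z : Fin 3 → ι → V) :
    ∑ ω, T (fun j => ∑ n, tripleSign ω j n • z j n) =
      4 ^ Fintype.card ι • ∑ n, T fun j => z j n := by
  have hexpand (ω : (ι → ℤˣ) × (ι → ℤˣ)) : T (fun j => ∑ n, tripleSign ω j n • z j n) =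
      ∑ r : Fin 3 → ι, (∏ j, (tripleSign ω j (r j) : ℤ)) • T fun j => z j (r j) := by
    simp only [T.map_sum, Units.smul_def, T.map_smul_univ]
  simp only [hexpand]
  rw [Finset.sum_comm, Finset.smul_sum]
  simp only [← Finset.sum_smul, sum_prod_tripleSign]
  refine (Fintype.sum_of_injective (Function.const (Fin 3)) Function.const_injective _ _
    (fun r hr => ?_) fun n => ?_).symm
  · rw [if_neg, zero_smul]
    rintro ⟨h0, h1⟩
    exact hr ⟨r 2, by ext j; fin_cases j <;> simp [h0, h1]⟩
  · simp only [Function.const_apply, and_self, if_true]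
    norm_cast

end Randomization

section SquareBound

lemma prod_rpow_eq_rpow_sum {κ : Type*} (s : Finset κ) (a : ℝ≥0∞) {q : κ → ℝ} (hq : ∀ j, 0 ≤ q j) :
    ∏ j ∈ s, a ^ q j = a ^ ∑ j ∈ s, q j := by
  classical
  induction s using Finset.induction with
  | empty => simp
  | insert j s hj ih =>
    rw [Finset.prod_insert hj, Finset.sum_insert hj, ih,
      ENNReal.rpow_add_of_nonneg _ _ (hq j) (Finset.sum_nonneg fun i _ => hq i)]

lemma sum_prod_rpow_le {κ Ω : Type*} [Fintype κ] [Fintype Ω] (X : κ → Ω → ℝ≥0∞) {q : κ → ℝ}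
    (hq : ∀ j, 0 ≤ q j) (hsum : ∑ j, q j = 1) :
    ∑ ω, ∏ j, X j ω ^ q j ≤ ∏ j, (∑ ω, X j ω) ^ q j := by
  let _ : MeasurableSpace Ω := ⊤
  have h := ENNReal.lintegral_prod_norm_pow_le (μ := Measure.count (α := Ω)) Finset.univ
    (f := X) (p := q) (fun j _ => measurable_from_top.aemeasurable) hsum (fun j _ => hq j)
  simpa [lintegral_count, tsum_fintype] using h

/-- The loss `∏ⱼ κ(pⱼ)^{1/pⱼ}` in passing from scalar to `ℓ²`-valued trilinear estimates, where
`κ(p)` is the constant in Khinchin's inequality. -/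
def meyerConst (p : Fin 3 → ℝ) : ℝ := ∏ j, khinchinConst (p j) ^ (p j)⁻¹

lemma ofReal_meyerConst {p : Fin 3 → ℝ} (hp : ∀ j, 0 < p j) :
    ENNReal.ofReal (meyerConst p) = ∏ j, ENNReal.ofReal (khinchinConst (p j)) ^ (p j)⁻¹ := by
  have hK (j : Fin 3) := (khinchinConst_pos (hp j)).le
  rw [meyerConst, ENNReal.ofReal_prod_of_nonneg fun j _ => Real.rpow_nonneg (hK j) _]
  simp only [ENNReal.ofReal_rpow_of_nonneg (hK _) (inv_nonneg.2 (hp _).le)]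

variable {ι : Type*} [Fintype ι] {p : Fin 3 → ℝ} {K : ℝ≥0∞}

lemma sum_prod_eLpNorm_tripleSign_le [DecidableEq ι] {α : Type*} [MeasurableSpace α]
    {μ : Measure α} (hp : ∀ j, 0 < p j) (hsum : ∑ j, (p j)⁻¹ = 1) {f : Fin 3 → ι → α → ℂ}
    (hf : ∀ j n, Measurable (f j n)) :
    ∑ ω, ∏ j, eLpNorm (fun x => ∑ n, tripleSign ω j n • f j n x) (ENNReal.ofReal (p j)) μ ≤
      4 ^ Fintype.card ι * (ENNReal.ofReal (meyerConst p) *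
        ∏ j, eLpNorm (sqFun (f j)) (ENNReal.ofReal (p j)) μ) := by
  have hp' (j : Fin 3) : 0 ≤ (p j)⁻¹ := inv_nonneg.2 (hp j).le
  have hKhinchin (j : Fin 3) :
      ∑ ω, ∫⁻ x, ‖∑ n, tripleSign ω j n • f j n x‖ₑ ^ p j ∂μ ≤
        4 ^ Fintype.card ι * (ENNReal.ofReal (khinchinConst (p j)) *
          ∫⁻ x, ‖sqFun (f j) x‖ₑ ^ p j ∂μ) := by
    rw [sum_comp_tripleSign j fun ε => ∫⁻ x, ‖∑ n, ε n • f j n x‖ₑ ^ p j ∂μ, nsmul_eq_mul,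
      show (4 : ℝ≥0∞) = 2 * 2 by norm_num, mul_pow, mul_assoc, ← mul_assoc (2 ^ _)
      (ENNReal.ofReal _)]
    push_cast
    gcongr
    exact lintegral_enorm_sum_signs_smul_rpow_le (hp j) (hf j)
  calc ∑ ω, ∏ j, eLpNorm (fun x => ∑ n, tripleSign ω j n • f j n x) (ENNReal.ofReal (p j)) μ
      = ∑ ω, ∏ j, (∫⁻ x, ‖∑ n, tripleSign ω j n • f j n x‖ₑ ^ p j ∂μ) ^ (p j)⁻¹ := by
        simp only [eLpNorm_ofReal_eq_lintegral_rpow (hp _)]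
    _ ≤ ∏ j, (∑ ω, ∫⁻ x, ‖∑ n, tripleSign ω j n • f j n x‖ₑ ^ p j ∂μ) ^ (p j)⁻¹ :=
        sum_prod_rpow_le _ hp' hsum
    _ ≤ ∏ j, (4 ^ Fintype.card ι * (ENNReal.ofReal (khinchinConst (p j)) *
          ∫⁻ x, ‖sqFun (f j) x‖ₑ ^ p j ∂μ)) ^ (p j)⁻¹ := by
        gcongr with j
        · exact hp' j
        · exact hKhinchin j
    _ = _ := by
        simp only [ENNReal.mul_rpow_of_nonneg _ _ (hp' _), Finset.prod_mul_distrib,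
          prod_rpow_eq_rpow_sum _ _ hp', hsum, ENNReal.rpow_one, ofReal_meyerConst hp,
          eLpNorm_ofReal_eq_lintegral_rpow (hp _)]

lemma exists_sum_enorm_map_le_sum_tripleSign [DecidableEq ι] {V : Type*} [AddCommGroup V]
    [Module ℂ V] (T : MultilinearMap ℂ (fun _ : Fin 3 => V) ℂ) (z : Fin 3 → ι → V) :
    ∃ c : Fin 3 → ι → ℂ, (∀ j n, ‖c j n‖ ≤ 1) ∧ 4 ^ Fintype.card ι * ∑ n, ‖T fun j => z j n‖ₑ ≤
      ∑ ω, ‖T fun j => ∑ n, tripleSign ω j n • c j n • z j n‖ₑ := by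
  choose θ hθ hθT using fun n => RCLike.exists_norm_eq_mul_self (T fun j => z j n)
  set c : Fin 3 → ι → ℂ := ![θ, 1, 1]
  have hcT (n : ι) : T (fun j => c j n • z j n) = ‖T fun j => z j n‖ := by
    rw [T.map_smul_univ, Fin.prod_univ_three]
    simpa [c] using (hθT n).symm
  refine ⟨c, fun j n => by fin_cases j <;> simp [c, hθ], ?_⟩
  calc (4 : ℝ≥0∞) ^ Fintype.card ι * ∑ n, ‖T fun j => z j n‖ₑ
      = ‖4 ^ Fintype.card ι • ∑ n, T fun j => c j n • z j n‖ₑ := by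
        simp only [hcT]
        rw [← Complex.ofReal_sum, nsmul_eq_mul, enorm_mul, ← ofReal_norm (Complex.ofReal _),
          Complex.norm_real, Real.norm_of_nonneg (by positivity),
          ENNReal.ofReal_sum_of_nonneg fun n _ => norm_nonneg _, Nat.cast_pow, enorm_pow]
        simp [← ofReal_norm (4 : ℂ)]
    _ = ‖∑ ω, T fun j => ∑ n, tripleSign ω j n • c j n • z j n‖ₑ := by
        exact congrArg _
          (sum_map_tripleSign (T.restrictScalars ℤ) fun j n => c j n • z j n).symm
    _ ≤ _ := enorm_sum_le _ _

variable {E : Type*} [NormedAddCommGroup E] [NormedSpace ℝ E] [MeasureSpace E]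

/-- The family of trilinear forms `Tⁿ` on Schwartz functions is bounded with constant `K` from
`L^{p₁}(ℓ²) × L^{p₂}(ℓ²) × L^{p₃}(ℓ²)` to `ℓ¹`. -/
def SquareBound (p : Fin 3 → ℝ) (K : ℝ≥0∞) (T : ι → (Fin 3 → 𝓢(E, ℂ)) → ℂ) : Prop :=
  ∀ g : Fin 3 → ι → 𝓢(E, ℂ), ∑ n, ‖T n fun j => g j n‖ₑ ≤
    K * ∏ j, eLpNorm (sqFun fun n => ⇑(g j n)) (ENNReal.ofReal (p j)) volume

theorem squareBound_of_bound [BorelSpace E] (hp : ∀ j, 0 < p j) (hsum : ∑ j, (p j)⁻¹ = 1)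
    (T : MultilinearMap ℂ (fun _ : Fin 3 => 𝓢(E, ℂ)) ℂ)
    (hT : ∀ g, ‖T g‖ₑ ≤ K * ∏ j, eLpNorm (g j) (ENNReal.ofReal (p j)) volume) :
    SquareBound p (K * ENNReal.ofReal (meyerConst p)) fun _ : ι => T := by
  classical
  intro g
  obtain ⟨c, hc, hcT⟩ := exists_sum_enorm_map_le_sum_tripleSign T g
  have hcoe (ω : (ι → ℤˣ) × (ι → ℤˣ)) (j : Fin 3) :
      ⇑(∑ n, tripleSign ω j n • c j n • g j n) =
        fun x => ∑ n, tripleSign ω j n • (c j n * g j n x) := by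
    ext x
    simp [Units.smul_def]
  refine (ENNReal.mul_le_mul_iff_right (a := 4 ^ Fintype.card ι) (by simp) (by finiteness)).1
    (hcT.trans ?_)
  calc ∑ ω, ‖T fun j => ∑ n, tripleSign ω j n • c j n • g j n‖ₑ
      ≤ ∑ ω, K * ∏ j, eLpNorm (fun x => ∑ n, tripleSign ω j n • (c j n * g j n x))
          (ENNReal.ofReal (p j)) volume := by
        simp only [← hcoe]
        exact Finset.sum_le_sum fun ω _ => hT _
    _ ≤ K * (4 ^ Fintype.card ι * (ENNReal.ofReal (meyerConst p) *
          ∏ j, eLpNorm (sqFun fun n x => c j n * g j n x) (ENNReal.ofReal (p j)) volume)) := by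
        rw [← Finset.mul_sum]
        gcongr
        exact sum_prod_eLpNorm_tripleSign_le hp hsum fun j n =>
          ((g j n).continuous.measurable.const_mul _)
    _ ≤ K * (4 ^ Fintype.card ι * (ENNReal.ofReal (meyerConst p) *
          ∏ j, eLpNorm (sqFun fun n => ⇑(g j n)) (ENNReal.ofReal (p j)) volume)) := by
        gcongr with j
        exact eLpNorm_sqFun_mul_le _ (hc j) _ _
    _ = _ := by ring

end SquareBound

section Fourier

lemma continuous_Phi : Continuous Phi := by unfold Phi; fun_prop

lemma continuous_comp3 (j : Fin 3) : Continuous fun x => comp3 x j := by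
  fin_cases j <;> simp only [comp3] <;> fun_prop

@[fun_prop]
lemma continuous_dot2 {X : Type*} [TopologicalSpace X] {f g : X → V2} (hf : Continuous f)
    (hg : Continuous g) : Continuous fun x => dot2 (f x) (g x) := by
  unfold dot2; fun_prop

lemma dot2_comm (x y : V2) : dot2 x y = dot2 y x := by
  simp only [dot2]; ring

lemma dot2_add_left (x y z : V2) : dot2 (x + y) z = dot2 x z + dot2 y z := by
  simp only [dot2, Prod.fst_add, Prod.snd_add]; ring

lemma dot2_add_right (x y z : V2) : dot2 x (y + z) = dot2 x y + dot2 x z := by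
  simp only [dot2, Prod.fst_add, Prod.snd_add]; ring

lemma dot2_neg_right (x y : V2) : dot2 x (-y) = -dot2 x y := by
  simp only [dot2, Prod.fst_neg, Prod.snd_neg]; ring

lemma dot2_smul_left (c : ℝ) (x y : V2) : dot2 (c • x) y = c * dot2 x y := by
  simp only [dot2, Prod.smul_fst, Prod.smul_snd, smul_eq_mul]; ring

lemma dot2_smul_right (c : ℝ) (x y : V2) : dot2 x (c • y) = c * dot2 x y := by
  simp only [dot2, Prod.smul_fst, Prod.smul_snd, smul_eq_mul]; ring

lemma FT_eq_integral_fourierChar (f : V2 → ℂ) (ξ : V2) : FT f ξ = ∫ x, 𝐞 (-dot2 x ξ) • f x := by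
  refine integral_congr_ae (.of_forall fun x => ?_)
  simp only [Circle.smul_def, Real.fourierChar_apply, smul_eq_mul]
  congr 2
  push_cast
  ring

lemma integral_equivRealProdCLM {E : Type*} [NormedAddCommGroup E] [NormedSpace ℝ E]
    (f : V2 → E) : ∫ z : ℂ, f (Complex.equivRealProdCLM z) = ∫ x, f x :=
  Complex.volume_preserving_equiv_real_prod.integral_comp
    Complex.measurableEquivRealProd.measurableEmbedding f

lemma inner_eq_dot2 (z w : ℂ) :
    inner ℝ z w = dot2 (Complex.equivRealProdCLM z) (Complex.equivRealProdCLM w) := by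
  simp only [Complex.inner, dot2, Complex.mul_re, Complex.conj_re, Complex.conj_im,
    Complex.equivRealProdCLM_apply]
  ring

/-- Schwartz functions on the plane as Schwartz functions on `ℂ`. The detour through `ℂ` gives
access to Fourier inversion, which requires an inner product space, whereas `ℝ × ℝ` carries the
supremum norm. -/
def schwartzEquivComplex : 𝓢(V2, ℂ) ≃ₗ[ℂ] 𝓢(ℂ, ℂ) :=
  LinearEquiv.ofLinearMap
    (SchwartzMap.compCLMOfContinuousLinearEquiv ℂ Complex.equivRealProdCLM).toLinearMap
    (SchwartzMap.compCLMOfContinuousLinearEquiv ℂ Complex.equivRealProdCLM.symm).toLinearMap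
    (LinearMap.ext fun g => SchwartzMap.ext fun z =>
      congrArg g (Complex.equivRealProdCLM.symm_apply_apply z))
    (LinearMap.ext fun g => SchwartzMap.ext fun x =>
      congrArg g (Complex.equivRealProdCLM.apply_symm_apply x))

/-- The Fourier transform `FT` as a linear equivalence of the Schwartz space of the plane. -/
def schwartzFT : 𝓢(V2, ℂ) ≃ₗ[ℂ] 𝓢(V2, ℂ) :=
  schwartzEquivComplex ≪≫ₗ (FourierTransform.fourierCLE ℂ 𝓢(ℂ, ℂ)).toLinearEquiv ≪≫ₗ
    schwartzEquivComplex.symm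

lemma schwartzFT_apply (g : 𝓢(V2, ℂ)) (ξ : V2) :
    schwartzFT g ξ = ∫ x, 𝐞 (-dot2 x ξ) • g x := by
  change 𝓕 (schwartzEquivComplex g) (Complex.equivRealProdCLM.symm ξ) = _
  rw [SchwartzMap.fourier_coe, Real.fourier_eq, ← integral_equivRealProdCLM]
  simp only [inner_eq_dot2, ContinuousLinearEquiv.apply_symm_apply]
  rfl

lemma schwartzFT_symm_apply (g : 𝓢(V2, ℂ)) (x : V2) :
    schwartzFT.symm g x = ∫ ξ, 𝐞 (dot2 x ξ) • g ξ := by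
  change 𝓕⁻ (schwartzEquivComplex g) (Complex.equivRealProdCLM.symm x) = _
  rw [SchwartzMap.fourierInv_coe, Real.fourierInv_eq, ← integral_equivRealProdCLM]
  simp only [inner_eq_dot2, ContinuousLinearEquiv.apply_symm_apply, dot2_comm _ x]
  rfl

lemma FT_schwartz (g : 𝓢(V2, ℂ)) : FT g = schwartzFT g := by
  ext ξ
  rw [FT_eq_integral_fourierChar, schwartzFT_apply]

lemma eq_integral_fourierChar_smul_schwartzFT (g : 𝓢(V2, ℂ)) (x : V2) :
    g x = ∫ ξ, 𝐞 (dot2 x ξ) • schwartzFT g ξ := by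
  rw [← schwartzFT_symm_apply, LinearEquiv.symm_apply_apply]

lemma schwartzFT_compSubConstCLM (g : 𝓢(V2, ℂ)) (y ξ : V2) :
    schwartzFT (g.compSubConstCLM ℂ y) ξ = 𝐞 (-dot2 y ξ) • schwartzFT g ξ := by
  rw [schwartzFT_apply, schwartzFT_apply, ← integral_add_right_eq_self _ y,
    Circle.smul_def, ← integral_smul]
  refine integral_congr_ae (.of_forall fun x => ?_)
  simp only [SchwartzMap.compSubConstCLM_apply, add_sub_cancel_right, dot2_add_left, neg_add_rev,
    AddChar.map_add_eq_mul, mul_smul, Circle.smul_def]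

end Fourier

section MultiplierForm

/-- The frequency-side product `f̂₁(ξ₁) f̂₂(ξ₂) f̂₃(-ξ₁ - ξ₂)`, as a function on `ℝ² × ℝ²`. -/
def freqProd (g : Fin 3 → 𝓢(V2, ℂ)) (ξ : V2 × V2) : ℂ := ∏ j, schwartzFT (g j) (comp3 (Phi ξ) j)

/-- `freqProd` at a fixed frequency, as a multilinear map. -/
def freqProdMultilinear (ξ : V2 × V2) : MultilinearMap ℂ (fun _ : Fin 3 => 𝓢(V2, ℂ)) ℂ :=
  (MultilinearMap.mkPiAlgebra ℂ (Fin 3) ℂ).compLinearMap fun j =>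
    ((BoundedContinuousFunction.evalCLM ℂ (comp3 (Phi ξ) j)) ∘L
      SchwartzMap.toBoundedContinuousFunctionCLM ℂ V2 ℂ).toLinearMap ∘ₗ schwartzFT.toLinearMap

lemma integrable_freqProd (g : Fin 3 → 𝓢(V2, ℂ)) : Integrable (freqProd g) := by
  have hprod := (schwartzFT (g 0)).integrable.mul_prod (schwartzFT (g 1)).integrable
    (μ := (volume : Measure V2)) (ν := (volume : Measure V2))
  refine (hprod.mul_bdd (c := _) ((schwartzFT (g 2)).continuous.comp
    ((continuous_comp3 2).comp continuous_Phi)).aestronglyMeasurable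
    (.of_forall fun ξ => (schwartzFT (g 2)).toBoundedContinuousFunction.norm_coe_le_norm _)).congr
    (.of_forall fun ξ => ?_)
  simp only [freqProd, Fin.prod_univ_three]
  rfl

/-- The trilinear form on Schwartz functions with multiplier the indicator function of `S`. It
is `Λ_D̃` when `S` is the preimage of `D̃` under `Φ`. -/
def multForm (S : Set (V2 × V2)) : MultilinearMap ℂ (fun _ : Fin 3 => 𝓢(V2, ℂ)) ℂ :=
  MultilinearMap.mk' (fun g => ∫ ξ in S, freqProd g ξ)
    (fun g j x y => by
      rw [← integral_add (integrable_freqProd _).integrableOn (integrable_freqProd _).integrableOn]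
      exact integral_congr_ae (.of_forall fun ξ => (freqProdMultilinear ξ).map_update_add g j x y))
    (fun g j c x => by
      rw [← integral_smul]
      exact integral_congr_ae (.of_forall fun ξ => (freqProdMultilinear ξ).map_update_smul g j c x))

lemma multForm_apply (S : Set (V2 × V2)) (g : Fin 3 → 𝓢(V2, ℂ)) :
    multForm S g = ∫ ξ in S, freqProd g ξ := rfl

lemma Lambda_eq_multForm {Dt : Set Amb} (hmeas : MeasurableSet Dt) (g : Fin 3 → 𝓢(V2, ℂ)) :
    Lambda Dt (g 0) (g 1) (g 2) = multForm (Phi ⁻¹' Dt) g := by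
  rw [Lambda, multForm_apply, ← integral_indicator (continuous_Phi.measurable hmeas)]
  refine integral_congr_ae (.of_forall fun ξ => ?_)
  by_cases h : Phi ξ ∈ Dt
  · rw [indicator_of_mem (mem_preimage.2 h), freqProd, Fin.prod_univ_three, LambdaIntegrand,
      indicator_of_mem h, one_mul, mul_assoc, FT_schwartz, FT_schwartz, FT_schwartz]
    rfl
  · simp [LambdaIntegrand, h]

lemma integral_prod_eq_integral_freqProd (g : Fin 3 → 𝓢(V2, ℂ)) :
    ∫ x, ∏ j, g j x = ∫ ξ, freqProd g ξ := by
  set H : V2 → V2 × V2 → ℂ := fun x ξ =>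
    (𝐞 (dot2 x ξ.1) • schwartzFT (g 0) ξ.1) * (𝐞 (dot2 x ξ.2) • schwartzFT (g 1) ξ.2) * g 2 x
    with hH
  have hint : Integrable (Function.uncurry H) := by
    refine ((g 2).integrable.mul_prod
      ((schwartzFT (g 0)).integrable.mul_prod (schwartzFT (g 1)).integrable)
      (μ := volume) (ν := volume.prod volume)).mono ?_ (.of_forall fun z => ?_)
    · refine Continuous.aestronglyMeasurable ?_
      simp only [hH, Function.uncurry_def, Circle.smul_def]
      fun_prop
    · simp only [hH, Function.uncurry_def, norm_mul, Circle.norm_smul]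
      exact le_of_eq (by ring)
  have hx (x : V2) : ∏ j, g j x = ∫ ξ, H x ξ := by
    rw [integral_mul_const, Measure.volume_eq_prod,
      integral_prod_mul (f := fun ξ => 𝐞 (dot2 x ξ) • schwartzFT (g 0) ξ)
        (g := fun ξ => 𝐞 (dot2 x ξ) • schwartzFT (g 1) ξ),
      ← eq_integral_fourierChar_smul_schwartzFT, ← eq_integral_fourierChar_smul_schwartzFT,
      Fin.prod_univ_three]
  have hξ (ξ : V2 × V2) : ∫ x, H x ξ = freqProd g ξ := by
    rw [freqProd, Fin.prod_univ_three, schwartzFT_apply (g 2), ← integral_const_mul]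
    refine integral_congr_ae (.of_forall fun x => ?_)
    have hphase : -dot2 x (comp3 (Phi ξ) 2) = dot2 x ξ.1 + dot2 x ξ.2 := by
      rw [← dot2_neg_right, ← dot2_add_right]
      exact congrArg _ (neg_neg _)
    simp only [hH, hphase, AddChar.map_add_eq_mul, Circle.smul_def, Circle.coe_mul, smul_eq_mul]
    change _ = schwartzFT (g 0) ξ.1 * schwartzFT (g 1) ξ.2 * _
    ring
  simp only [hx, integral_integral_swap hint, hξ]

/-- The trilinear correlation `t ↦ ∫ f₁(x - t v₁) f₂(x - t v₂) f₃(x - t v₃) dx`. -/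
def corr (v : Amb) (f : Fin 3 → V2 → ℂ) (t : ℝ) : ℂ := ∫ x, ∏ j, f j (x - t • comp3 v j)

lemma fourierChar_sum {ι : Type*} (s : Finset ι) (a : ι → ℝ) :
    (𝐞 (∑ j ∈ s, a j) : ℂ) = ∏ j ∈ s, (𝐞 (a j) : ℂ) := by
  classical
  induction s using Finset.induction with
  | empty => simp
  | insert j s hj ih =>
    rw [Finset.sum_insert hj, Finset.prod_insert hj, AddChar.map_add_eq_mul, Circle.coe_mul, ih]

lemma corr_eq_integral_freqProd (v : Amb) (g : Fin 3 → 𝓢(V2, ℂ)) (t : ℝ) :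
    corr v (fun j => g j) t = ∫ ξ, 𝐞 (-(t * dot6 (Phi ξ) v)) • freqProd g ξ := by
  have h := integral_prod_eq_integral_freqProd fun j => (g j).compSubConstCLM ℂ (t • comp3 v j)
  refine h.trans (integral_congr_ae (.of_forall fun ξ => ?_))
  have hphase : -(t * dot6 (Phi ξ) v) = ∑ j, -dot2 (t • comp3 v j) (comp3 (Phi ξ) j) := by
    simp only [Fin.sum_univ_three, dot2_smul_left, dot2_comm (comp3 v _), dot6]
    simp only [comp3, Matrix.cons_val]
    ring
  simp only [freqProd, schwartzFT_compSubConstCLM, hphase, Circle.smul_def, smul_eq_mul,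
    Finset.prod_mul_distrib, fourierChar_sum]

end MultiplierForm

section Symmetries

lemma comp3_Phi_sub (ξ η : V2 × V2) (j : Fin 3) :
    comp3 (Phi (ξ - η)) j = comp3 (Phi ξ) j - comp3 (Phi η) j := by
  fin_cases j <;> simp [comp3, Phi]; abel

lemma comp3_Phi_smul (c : ℝ) (ξ : V2 × V2) (j : Fin 3) :
    comp3 (Phi (c • ξ)) j = c • comp3 (Phi ξ) j := by
  fin_cases j <;> simp [comp3, Phi]

/-- Modulation of a Schwartz function to the frequency `a`, realised as a translation on the
Fourier side. -/
def modulate (a : V2) (g : 𝓢(V2, ℂ)) : 𝓢(V2, ℂ) :=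
  schwartzFT.symm ((schwartzFT g).compSubConstCLM ℂ a)

lemma schwartzFT_modulate (a : V2) (g : 𝓢(V2, ℂ)) (ξ : V2) :
    schwartzFT (modulate a g) ξ = schwartzFT g (ξ - a) := by
  rw [modulate, LinearEquiv.apply_symm_apply, SchwartzMap.compSubConstCLM_apply]

lemma modulate_apply (a : V2) (g : 𝓢(V2, ℂ)) (x : V2) :
    modulate a g x = 𝐞 (dot2 x a) • g x := by
  rw [modulate, schwartzFT_symm_apply, ← integral_add_right_eq_self _ a,
    eq_integral_fourierChar_smul_schwartzFT g, Circle.smul_def, ← integral_smul]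
  refine integral_congr_ae (.of_forall fun ξ => ?_)
  simp only [SchwartzMap.compSubConstCLM_apply, add_sub_cancel_right, dot2_add_right,
    add_comm (dot2 x ξ), AddChar.map_add_eq_mul, mul_smul, Circle.smul_def]

/-- The dilate `x ↦ g (u x)` of a Schwartz function. -/
def dilate (u : ℝˣ) (g : 𝓢(V2, ℂ)) : 𝓢(V2, ℂ) :=
  SchwartzMap.compCLMOfContinuousLinearEquiv ℂ (ContinuousLinearEquiv.smulLeft u) g

lemma dilate_apply (u : ℝˣ) (g : 𝓢(V2, ℂ)) (x : V2) : dilate u g x = g ((u : ℝ) • x) := rfl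

lemma schwartzFT_dilate (u : ℝˣ) (g : 𝓢(V2, ℂ)) (ξ : V2) :
    schwartzFT (dilate u g) ξ = ((u : ℝ) ^ 2)⁻¹ • schwartzFT g ((u : ℝ)⁻¹ • ξ) := by
  have h := Measure.integral_comp_smul (volume : Measure V2)
    (fun x => 𝐞 (-dot2 x ((u : ℝ)⁻¹ • ξ)) • g x) u
  simpa [dot2_smul_left, dot2_smul_right, schwartzFT_apply, dilate_apply] using h

lemma freqProd_modulate (a : V2 × V2) (g : Fin 3 → 𝓢(V2, ℂ)) (ξ : V2 × V2) :
    freqProd (fun j => modulate (comp3 (Phi a) j) (g j)) ξ = freqProd g (ξ - a) := by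
  simp only [freqProd, schwartzFT_modulate, comp3_Phi_sub]

lemma freqProd_dilate (u : ℝˣ) (g : Fin 3 → 𝓢(V2, ℂ)) (ξ : V2 × V2) :
    freqProd (fun j => dilate u (g j)) ξ = ((u : ℝ) ^ 6)⁻¹ • freqProd g ((u : ℝ)⁻¹ • ξ) := by
  simp only [freqProd, schwartzFT_dilate, comp3_Phi_smul, Fin.prod_univ_three,
    Complex.real_smul]
  push_cast
  ring

instance isAddHaarMeasure_volume_V2_prod_V2 : (volume : Measure (V2 × V2)).IsAddHaarMeasure :=
  Measure.prod.instIsAddHaarMeasure (volume : Measure V2) (volume : Measure V2)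

lemma multForm_modulate (S : Set (V2 × V2)) (a : V2 × V2) (g : Fin 3 → 𝓢(V2, ℂ)) :
    multForm S (fun j => modulate (comp3 (Phi a) j) (g j)) = multForm ((· + a) ⁻¹' S) g := by
  rw [multForm_apply, multForm_apply,
    ← (measurePreserving_add_right volume a).setIntegral_preimage_emb
      (measurableEmbedding_addRight a)]
  simp only [freqProd_modulate, add_sub_cancel_right]

lemma multForm_dilate (S : Set (V2 × V2)) (u : ℝˣ) (g : Fin 3 → 𝓢(V2, ℂ)) :
    multForm S (fun j => dilate u (g j)) =
      ((u : ℝ) ^ 2)⁻¹ • multForm ((fun ζ => (u : ℝ) • ζ) ⁻¹' S) g := by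
  have hu : (u : ℝ) ≠ 0 := u.ne_zero
  have hpow : |(((u : ℝ)⁻¹ ^ Module.finrank ℝ (V2 × V2))⁻¹)| = (u : ℝ) ^ 4 := by
    simp [(show Even 4 by decide).pow_abs]
  simp only [multForm_apply, freqProd_dilate]
  rw [integral_smul, Measure.setIntegral_comp_smul volume _ S (inv_ne_zero hu), hpow,
    Set.preimage_smul₀ hu, smul_smul]
  congr 1
  field_simp

variable {ι : Type*} [Fintype ι] {p : Fin 3 → ℝ} {K : ℝ≥0∞}

lemma eLpNorm_sqFun_dilate {p : ℝ} (hp : 0 < p) (g : ι → 𝓢(V2, ℂ)) (u : ℝˣ) :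
    eLpNorm (sqFun fun n => ⇑(dilate u (g n))) (ENNReal.ofReal p) volume =
      ENNReal.ofReal ((u : ℝ) ^ 2)⁻¹ ^ p⁻¹ *
        eLpNorm (sqFun fun n => ⇑(g n)) (ENNReal.ofReal p) volume := by
  have hsq : (sqFun fun n => ⇑(dilate u (g n))) =
      fun x => (sqFun fun n => ⇑(g n)) ((u : ℝ) • x) := rfl
  have hmap : Measure.map (fun x => (u : ℝ) • x) (volume : Measure V2) =
      ENNReal.ofReal ((u : ℝ) ^ 2)⁻¹ • volume := by
    rw [Measure.map_addHaar_smul volume u.ne_zero]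
    simp
  have hemb : MeasurableEmbedding fun x : V2 => (u : ℝ) • x :=
    (Homeomorph.smulOfNeZero (u : ℝ) u.ne_zero).measurableEmbedding
  rw [eLpNorm_ofReal_eq_lintegral_rpow hp, eLpNorm_ofReal_eq_lintegral_rpow hp, hsq,
    ← ENNReal.mul_rpow_of_nonneg _ _ (inv_nonneg.2 hp.le), ← smul_eq_mul,
    ← lintegral_smul_measure, ← hmap, hemb.lintegral_map]

lemma SquareBound.multForm_preimage_add {S : ι → Set (V2 × V2)}
    (h : SquareBound p K fun n => multForm (S n)) (a : ι → V2 × V2) :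
    SquareBound p K fun n => multForm ((· + a n) ⁻¹' S n) := by
  intro g
  have hsq (j : Fin 3) : sqFun (fun n => ⇑(modulate (comp3 (Phi (a n)) j) (g j n))) =
      sqFun fun n => ⇑(g j n) := by
    ext x
    simp only [sqFun, modulate_apply, Circle.norm_smul]
  simpa only [multForm_modulate, hsq] using
    h fun j n => modulate (comp3 (Phi (a n)) j) (g j n)

lemma SquareBound.multForm_preimage_smul {S : ι → Set (V2 × V2)} (hp : ∀ j, 0 < p j)
    (hsum : ∑ j, (p j)⁻¹ = 1)
    (h : SquareBound p K fun n => multForm (S n)) (u : ℝˣ) :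
    SquareBound p K fun n => multForm ((fun ζ => (u : ℝ) • ζ) ⁻¹' S n) := by
  intro g
  have hu : 0 < ((u : ℝ) ^ 2)⁻¹ := inv_pos.2 (sq_pos_of_ne_zero u.ne_zero)
  have hg := h fun j n => dilate u (g j n)
  simp only [multForm_dilate, eLpNorm_sqFun_dilate (hp _), Finset.prod_mul_distrib, enorm_smul,
    prod_rpow_eq_rpow_sum _ _ fun j => inv_nonneg.2 (hp j).le, hsum, ENNReal.rpow_one,
    ← Finset.mul_sum, Real.enorm_of_nonneg hu.le, mul_left_comm K] at hg
  exact (ENNReal.mul_le_mul_iff_right (by simp) ENNReal.ofReal_ne_top).1 hg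

end Symmetries

section BlowUp

variable {ι : Type*} [Fintype ι] {p : Fin 3 → ℝ} {K : ℝ≥0∞}

lemma SquareBound.of_tendsto {E κ : Type*} [NormedAddCommGroup E] [NormedSpace ℝ E]
    [MeasureSpace E] {l : Filter κ} [l.NeBot] {T : κ → ι → (Fin 3 → 𝓢(E, ℂ)) → ℂ}
    {T' : ι → (Fin 3 → 𝓢(E, ℂ)) → ℂ} (hT : ∀ n g, Tendsto (fun r => T r n g) l (𝓝 (T' n g)))
    (hbound : ∀ᶠ r in l, SquareBound p K (T r)) : SquareBound p K T' := fun g =>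
  le_of_tendsto (tendsto_finsetSum _ fun n _ => (hT n _).enorm) (hbound.mono fun _ hr => hr g)

lemma tendsto_multForm {κ : Type*} {l : Filter κ} [l.IsCountablyGenerated]
    {S : κ → Set (V2 × V2)} {S' : Set (V2 × V2)} (hS : ∀ᶠ r in l, MeasurableSet (S r))
    (hS' : MeasurableSet S') (h : ∀ᵐ ζ, ∀ᶠ r in l, ζ ∈ S r ↔ ζ ∈ S') (g : Fin 3 → 𝓢(V2, ℂ)) :
    Tendsto (fun r => multForm (S r) g) l (𝓝 (multForm S' g)) := by
  simp only [multForm_apply, ← integral_indicator hS']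
  refine (tendsto_integral_filter_of_dominated_convergence (fun ζ => ‖freqProd g ζ‖)
    (F := fun r => (S r).indicator (freqProd g)) ?_ ?_ (integrable_freqProd g).norm ?_).congr' ?_
  · exact hS.mono fun r hr => ((integrable_freqProd g).indicator hr).aestronglyMeasurable
  · exact .of_forall fun r => .of_forall fun ζ => norm_indicator_le_norm_self _ _
  · filter_upwards [h] with ζ hζ
    refine tendsto_const_nhds.congr' (hζ.mono fun r hr => ?_)
    beta_reduce
    by_cases hmem : ζ ∈ S'
    · rw [indicator_of_mem hmem, indicator_of_mem (hr.2 hmem)]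
    · rw [indicator_of_notMem hmem, indicator_of_notMem (mt hr.1 hmem)]
  · exact hS.mono fun r hr => integral_indicator hr

/-- The linear functional `ζ ↦ Φ(ζ) · v`. -/
def normalFunctional (v : Amb) : V2 × V2 →ₗ[ℝ] ℝ where
  toFun ζ := dot6 (Phi ζ) v
  map_add' x y := by
    simp only [dot6, dot2, Phi, Prod.fst_add, Prod.snd_add, Prod.fst_neg, Prod.snd_neg]
    ring
  map_smul' c x := by
    simp only [dot6, dot2, Phi, Prod.fst_add, Prod.snd_add, Prod.smul_fst, Prod.smul_snd,
      Prod.fst_neg, Prod.snd_neg, smul_eq_mul, RingHom.id_apply]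
    ring

lemma normalFunctional_apply (v : Amb) (ζ : V2 × V2) :
    normalFunctional v ζ = dot6 (Phi ζ) v := rfl

lemma continuous_normalFunctional (v : Amb) : Continuous (normalFunctional v) :=
  (normalFunctional v).continuous_of_finiteDimensional

/-- The half-space `P_v`, transported to `ℝ² × ℝ²` by `Φ`. -/
def halfSpace (v : Amb) : Set (V2 × V2) := {ζ | 0 < normalFunctional v ζ}

lemma measurableSet_halfSpace (v : Amb) : MeasurableSet (halfSpace v) :=
  (isOpen_lt continuous_const (continuous_normalFunctional v)).measurableSet

lemma Phi_mem_Pv_iff (v : Amb) (ζ : V2 × V2) : Phi ζ ∈ Pv v ↔ ζ ∈ halfSpace v := by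
  simp [Pv, halfSpace, normalFunctional_apply, Gamma, Phi]

lemma Phi_mem_blowSet_iff (Dt : Set Amb) (b ζ : V2 × V2) {r : ℝ} (hr : r ≠ 0) :
    Phi ζ ∈ blowSet Dt (Phi b) r ↔ Phi (r⁻¹ • ζ + b) ∈ Dt := by
  have hPhi : Phi (r⁻¹ • ζ + b) = r⁻¹ • Phi ζ + Phi b := by
    ext <;> simp [Phi] <;> ring
  rw [hPhi]
  constructor
  · rintro ⟨y, hy, hyζ⟩
    rwa [← hyζ, inv_smul_smul₀ hr, sub_add_cancel]
  · exact fun h => ⟨_, h, by simp only [add_sub_cancel_right, smul_inv_smul₀ hr]⟩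

lemma BlowupNormal.eventually_mem_iff {Dt : Set Amb} {b : V2 × V2} {v : Amb}
    (h : BlowupNormal Dt (Phi b) v) :
    ∀ᵐ ζ, ∀ᶠ r : ℝ in atTop, Phi (r⁻¹ • ζ + b) ∈ Dt ↔ ζ ∈ halfSpace v := by
  filter_upwards [h] with ζ hζ
  rw [tendsto_indicator_const_apply_iff_eventually] at hζ
  filter_upwards [hζ, eventually_ne_atTop 0] with r hr hr0
  rw [← Phi_mem_blowSet_iff Dt b ζ hr0, hr, Phi_mem_Pv_iff]

theorem SquareBound.of_blowupNormal {Dt : Set Amb} (hmeas : MeasurableSet Dt) (hp : ∀ j, 0 < p j)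
    (hsum : ∑ j, (p j)⁻¹ = 1) (h : SquareBound p K fun _ : ι => multForm (Phi ⁻¹' Dt))
    {b : ι → V2 × V2} {v : ι → Amb} (hv : ∀ n, BlowupNormal Dt (Phi (b n)) (v n)) :
    SquareBound p K fun n => multForm (halfSpace (v n)) := by
  refine .of_tendsto (l := atTop)
    (T := fun (r : ℝ) n => multForm ((fun ζ => r⁻¹ • ζ) ⁻¹' ((· + b n) ⁻¹' (Phi ⁻¹' Dt))))
    (fun n => tendsto_multForm ?_ (measurableSet_halfSpace _) (hv n).eventually_mem_iff) ?_
  · exact .of_forall fun r => (continuous_Phi.measurable.comp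
      ((measurable_const_smul r⁻¹).add_const (b n))) hmeas
  · filter_upwards [eventually_ne_atTop 0] with r hr
    exact (h.multForm_preimage_add b).multForm_preimage_smul hp hsum
      (Units.mk0 r⁻¹ (inv_ne_zero hr))

end BlowUp

section Kernel

open Real

/-- The two-sided exponential density of total mass one, which is the Fourier transform of
`cauchyBump c`. -/
def expKer (c a : ℝ) : ℝ := π * c * rexp (-(2 * π * c * |a|))

/-- The bump `t ↦ 1 / (1 + t² / c²)` of width `c`. -/
def cauchyBump (c t : ℝ) : ℝ := (1 + (t / c) ^ 2)⁻¹

@[fun_prop]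
lemma continuous_expKer (c : ℝ) : Continuous (expKer c) := by
  unfold expKer; fun_prop

@[fun_prop]
lemma continuous_cauchyBump (c : ℝ) : Continuous (cauchyBump c) :=
  Continuous.inv₀ (by fun_prop) fun t => by positivity

lemma expKer_nonneg {c : ℝ} (hc : 0 < c) (a : ℝ) : 0 ≤ expKer c a := by
  unfold expKer; positivity

lemma expKer_neg (c a : ℝ) : expKer c (-a) = expKer c a := by simp only [expKer, abs_neg]

lemma integrable_cauchyBump {c : ℝ} (hc : c ≠ 0) : Integrable (cauchyBump c) :=
  integrable_inv_one_add_sq.comp_div hc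

lemma fourierChar_smul_expKer_of_nonneg (c t : ℝ) {a : ℝ} (ha : 0 ≤ a) :
    𝐞 (-(a * t)) • (expKer c a : ℂ) = π * c * Complex.exp (-(2 * π * (c + t * Complex.I)) * a) := by
  rw [Circle.smul_def, fourierChar_apply, expKer, abs_of_nonneg ha, smul_eq_mul]
  push_cast
  rw [mul_left_comm, ← Complex.exp_add]
  ring_nf

lemma fourierChar_smul_expKer_of_nonpos (c t : ℝ) {a : ℝ} (ha : a ≤ 0) :
    𝐞 (-(a * t)) • (expKer c a : ℂ) = π * c * Complex.exp (2 * π * (c - t * Complex.I) * a) := by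
  rw [Circle.smul_def, fourierChar_apply, expKer, abs_of_nonpos ha, smul_eq_mul]
  push_cast
  rw [mul_left_comm, ← Complex.exp_add]
  ring_nf

lemma integrableOn_Ioi_fourierChar_smul_expKer {c : ℝ} (hc : 0 < c) (t : ℝ) :
    IntegrableOn (fun a => 𝐞 (-(a * t)) • (expKer c a : ℂ)) (Ioi 0) :=
  IntegrableOn.congr_fun
    ((integrableOn_exp_mul_complex_Ioi (by simpa [pi_pos] using hc) 0).const_mul (π * c : ℂ))
    (fun _ ha => (fourierChar_smul_expKer_of_nonneg c t (le_of_lt ha)).symm) measurableSet_Ioi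

lemma integrableOn_Iic_fourierChar_smul_expKer {c : ℝ} (hc : 0 < c) (t : ℝ) :
    IntegrableOn (fun a => 𝐞 (-(a * t)) • (expKer c a : ℂ)) (Iic 0) :=
  IntegrableOn.congr_fun
    ((integrableOn_exp_mul_complex_Iic (by simpa [pi_pos] using hc) 0).const_mul (π * c : ℂ))
    (fun _ ha => (fourierChar_smul_expKer_of_nonpos c t ha).symm) measurableSet_Iic

lemma integrable_expKer {c : ℝ} (hc : 0 < c) : Integrable (expKer c) := by
  have h := (integrableOn_Iic_fourierChar_smul_expKer hc 0).union
    (integrableOn_Ioi_fourierChar_smul_expKer hc 0)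
  rw [Iic_union_Ioi, integrableOn_univ] at h
  simpa using h.re

lemma integral_Ioi_fourierChar_smul_expKer {c : ℝ} (hc : 0 < c) (t : ℝ) :
    ∫ a in Ioi 0, 𝐞 (-(a * t)) • (expKer c a : ℂ) = c / (2 * (c + t * Complex.I)) := by
  rw [setIntegral_congr_fun measurableSet_Ioi fun a ha =>
    fourierChar_smul_expKer_of_nonneg c t (le_of_lt ha), integral_const_mul,
    integral_exp_mul_complex_Ioi (by simpa [pi_pos] using hc), Complex.ofReal_zero, mul_zero,
    Complex.exp_zero, neg_div_neg_eq, mul_one_div, mul_assoc 2, mul_left_comm 2,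
    mul_div_mul_left _ _ (Complex.ofReal_ne_zero.2 pi_ne_zero)]

lemma integral_Iic_fourierChar_smul_expKer {c : ℝ} (hc : 0 < c) (t : ℝ) :
    ∫ a in Iic 0, 𝐞 (-(a * t)) • (expKer c a : ℂ) = c / (2 * (c - t * Complex.I)) := by
  rw [setIntegral_congr_fun measurableSet_Iic fun a ha =>
    fourierChar_smul_expKer_of_nonpos c t ha, integral_const_mul,
    integral_exp_mul_complex_Iic (by simpa [pi_pos] using hc), Complex.ofReal_zero, mul_zero,
    Complex.exp_zero, mul_one_div, mul_assoc 2, mul_left_comm 2,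
    mul_div_mul_left _ _ (Complex.ofReal_ne_zero.2 pi_ne_zero)]

lemma fourier_expKer {c : ℝ} (hc : 0 < c) : 𝓕 (fun a => (expKer c a : ℂ)) =
    fun t => (cauchyBump c t : ℂ) := by
  ext t
  have hsub : (c - t * Complex.I : ℂ) ≠ 0 := fun h => hc.ne' (by simpa using congrArg Complex.re h)
  have hadd : (c + t * Complex.I : ℂ) ≠ 0 := fun h => hc.ne' (by simpa using congrArg Complex.re h)
  have hfactor : (c : ℂ) ^ 2 + t ^ 2 = (c - t * Complex.I) * (c + t * Complex.I) := by
    linear_combination (t : ℂ) ^ 2 * Complex.I_sq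
  have hbump : (cauchyBump c t : ℂ) = c ^ 2 / ((c - t * Complex.I) * (c + t * Complex.I)) := by
    rw [← hfactor]
    exact_mod_cast show cauchyBump c t = c ^ 2 / (c ^ 2 + t ^ 2) by unfold cauchyBump; field_simp
  rw [fourier_real_eq, ← intervalIntegral.integral_Iic_add_Ioi
    (integrableOn_Iic_fourierChar_smul_expKer hc t) (integrableOn_Ioi_fourierChar_smul_expKer hc t),
    integral_Iic_fourierChar_smul_expKer hc, integral_Ioi_fourierChar_smul_expKer hc, hbump]
  field_simp
  ring

lemma integral_Iic_expKer {c : ℝ} (hc : 0 < c) : ∫ a in Iic 0, expKer c a = 1 / 2 := by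
  have h := integral_Iic_fourierChar_smul_expKer hc 0
  have hc' : (c : ℂ) ≠ 0 := Complex.ofReal_ne_zero.2 hc.ne'
  simp only [mul_zero, neg_zero, AddChar.map_zero_eq_one, one_smul, Complex.ofReal_zero, zero_mul,
    sub_zero, integral_complex_ofReal, div_mul_cancel_right₀ hc'] at h
  exact Complex.ofReal_injective (h.trans (by simp))

lemma integral_expKer {c : ℝ} (hc : 0 < c) : ∫ a, expKer c a = 1 := by
  have h := (integrable_expKer hc).integrableOn (s := Iic 0)
  have h' := (integrable_expKer hc).integrableOn (s := Ioi 0)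
  have hsymm := integral_comp_neg_Iic (0 : ℝ) (expKer c)
  simp only [expKer_neg, neg_zero] at hsymm
  rw [← intervalIntegral.integral_Iic_add_Ioi h h', ← hsymm, integral_Iic_expKer hc, add_halves]

lemma fourier_cauchyBump {c : ℝ} (hc : 0 < c) :
    𝓕 (fun t => (cauchyBump c t : ℂ)) = fun a => (expKer c a : ℂ) := by
  ext a
  have hinv := Continuous.fourierInv_fourier_eq (f := fun a => (expKer c a : ℂ)) (by fun_prop)
    (integrable_expKer hc).ofReal
    (by rw [fourier_expKer hc]; exact (integrable_cauchyBump hc.ne').ofReal)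
  rw [fourier_expKer hc] at hinv
  rw [← expKer_neg, ← congrFun hinv (-a), fourierInv_eq_fourier_neg, neg_neg]

/-- A smooth odd truncation of `1 / t`, decaying outside `δ < |t| < 1 / δ`. -/
def pvKernel (δ t : ℝ) : ℝ := (cauchyBump δ⁻¹ t - cauchyBump δ t) / t

lemma mul_pvKernel (δ t : ℝ) : t * pvKernel δ t = cauchyBump δ⁻¹ t - cauchyBump δ t := by
  rcases eq_or_ne t 0 with rfl | ht
  · simp [cauchyBump]
  · rw [pvKernel, mul_div_cancel₀ _ ht]

lemma pvKernel_neg (δ t : ℝ) : pvKernel δ (-t) = -pvKernel δ t := by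
  simp only [pvKernel, cauchyBump, neg_div, neg_sq, div_neg]

lemma pvKernel_eq {δ : ℝ} (hδ : δ ≠ 0) (t : ℝ) :
    pvKernel δ t = (1 - δ ^ 4) * (t / (δ ^ 2 + t ^ 2)) * cauchyBump δ⁻¹ t := by
  rcases eq_or_ne t 0 with rfl | ht
  · simp [pvKernel]
  · unfold pvKernel cauchyBump
    field_simp
    ring

lemma abs_div_sq_add_sq_le {δ : ℝ} (hδ : 0 < δ) (t : ℝ) : |t / (δ ^ 2 + t ^ 2)| ≤ (2 * δ)⁻¹ := by
  have hden : 0 < δ ^ 2 + t ^ 2 := by positivity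
  rw [abs_div, abs_of_pos hden, div_le_iff₀ hden, inv_mul_eq_div, le_div_iff₀ (by positivity)]
  nlinarith [sq_nonneg (|t| - δ), sq_abs t]

lemma integrable_pvKernel {δ : ℝ} (hδ : 0 < δ) : Integrable (pvKernel δ) := by
  have hcont : Continuous fun t : ℝ => t / (δ ^ 2 + t ^ 2) :=
    continuous_id.div (by fun_prop) fun t => by positivity
  rw [funext (pvKernel_eq hδ.ne')]
  simp only [mul_assoc]
  exact ((integrable_cauchyBump (inv_ne_zero hδ.ne')).bdd_mul hcont.aestronglyMeasurable
    (.of_forall (abs_div_sq_add_sq_le hδ))).const_mul _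

/-- The derivative of the Fourier transform of `pvKernel δ`. -/
def pvDensity (δ a : ℝ) : ℂ := -2 * π * Complex.I * (expKer δ⁻¹ a - expKer δ a)

@[fun_prop]
lemma continuous_pvDensity (δ : ℝ) : Continuous (pvDensity δ) := by
  unfold pvDensity; fun_prop

lemma integrable_pvDensity {δ : ℝ} (hδ : 0 < δ) : Integrable (pvDensity δ) :=
  ((integrable_expKer (inv_pos.2 hδ)).ofReal.sub (integrable_expKer hδ).ofReal).const_mul _

lemma lintegral_enorm_expKer {c : ℝ} (hc : 0 < c) : ∫⁻ a, ‖expKer c a‖ₑ = 1 := by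
  simp only [Real.enorm_of_nonneg (expKer_nonneg hc _)]
  rw [← ofReal_integral_eq_lintegral_ofReal (integrable_expKer hc)
    (.of_forall (expKer_nonneg hc)), integral_expKer hc, ENNReal.ofReal_one]

lemma lintegral_enorm_pvDensity_le {δ : ℝ} (hδ : 0 < δ) :
    ∫⁻ a, ‖pvDensity δ a‖ₑ ≤ ENNReal.ofReal (4 * π) := by
  have hcoeff : ‖(-2 * π * Complex.I : ℂ)‖ₑ = ENNReal.ofReal (2 * π) := by
    rw [← ofReal_norm]
    simp [abs_of_pos pi_pos]
  calc ∫⁻ a, ‖pvDensity δ a‖ₑ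
      ≤ ∫⁻ a, ENNReal.ofReal (2 * π) * (‖expKer δ⁻¹ a‖ₑ + ‖expKer δ a‖ₑ) := by
        refine lintegral_mono fun a => ?_
        rw [pvDensity, enorm_mul, hcoeff, ← Complex.ofReal_sub, ← ofReal_norm, Complex.norm_real,
          ofReal_norm]
        gcongr
        exact enorm_sub_le
    _ = ENNReal.ofReal (4 * π) := by
        rw [lintegral_const_mul' _ _ ENNReal.ofReal_ne_top,
          lintegral_add_left (by fun_prop), lintegral_enorm_expKer (inv_pos.2 hδ),
          lintegral_enorm_expKer hδ, one_add_one_eq_two, ← ENNReal.ofReal_ofNat,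
          ← ENNReal.ofReal_mul (by positivity)]
        ring_nf

lemma integral_Iic_zero_pvDensity {δ : ℝ} (hδ : 0 < δ) : ∫ a in Iic 0, pvDensity δ a = 0 := by
  simp only [pvDensity, ← Complex.ofReal_sub]
  rw [integral_const_mul, integral_complex_ofReal,
    integral_sub (integrable_expKer (inv_pos.2 hδ)).integrableOn
      (integrable_expKer hδ).integrableOn,
    integral_Iic_expKer hδ, integral_Iic_expKer (inv_pos.2 hδ), sub_self, Complex.ofReal_zero,
    mul_zero]

lemma fourier_pvKernel_zero (δ : ℝ) : 𝓕 (fun t => (pvKernel δ t : ℂ)) 0 = 0 := by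
  have h := integral_neg_eq_self (fun t => (pvKernel δ t : ℂ)) volume
  simp only [pvKernel_neg, Complex.ofReal_neg, integral_neg] at h
  simp only [fourier_real_eq, mul_zero, neg_zero, AddChar.map_zero_eq_one, one_smul]
  exact self_eq_neg.1 h.symm

lemma fourier_cauchyBump_sub {δ : ℝ} (hδ : 0 < δ) (s : ℝ) :
    𝓕 (fun t => (cauchyBump δ⁻¹ t - cauchyBump δ t : ℂ)) s = expKer δ⁻¹ s - expKer δ s := by
  rw [← congrFun (fourier_cauchyBump hδ) s, ← congrFun (fourier_cauchyBump (inv_pos.2 hδ)) s]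
  simp only [fourier_eq, smul_sub]
  exact integral_sub
    ((fourierIntegral_convergent_iff s).2 (integrable_cauchyBump (inv_ne_zero hδ.ne')).ofReal)
    ((fourierIntegral_convergent_iff s).2 (integrable_cauchyBump hδ.ne').ofReal)

lemma hasDerivAt_fourier_pvKernel {δ : ℝ} (hδ : 0 < δ) (s : ℝ) :
    HasDerivAt (𝓕 fun t => (pvKernel δ t : ℂ)) (pvDensity δ s) s := by
  have hmul (t : ℝ) : t • (pvKernel δ t : ℂ) = cauchyBump δ⁻¹ t - cauchyBump δ t := by
    rw [Complex.real_smul, ← Complex.ofReal_mul, mul_pvKernel, Complex.ofReal_sub]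
  have hint : Integrable fun t : ℝ => t • (pvKernel δ t : ℂ) := by
    simp only [hmul]
    exact (integrable_cauchyBump (inv_ne_zero hδ.ne')).ofReal.sub
      (integrable_cauchyBump hδ.ne').ofReal
  refine (hasDerivAt_fourier (integrable_pvKernel hδ).ofReal hint s).congr_deriv ?_
  rw [pvDensity, ← fourier_cauchyBump_sub hδ]
  simp only [fourier_real_eq, ← hmul, Complex.real_smul, smul_eq_mul, ← integral_const_mul,
    Circle.smul_def]
  congr with t
  ring

lemma fourier_pvKernel {δ : ℝ} (hδ : 0 < δ) (s : ℝ) :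
    𝓕 (fun t => (pvKernel δ t : ℂ)) s = ∫ a in Iic s, pvDensity δ a := by
  have hI := integrable_pvDensity hδ
  have hftc := intervalIntegral.integral_eq_sub_of_hasDerivAt (a := 0) (b := s)
    (fun x _ => hasDerivAt_fourier_pvKernel hδ x)
    ((continuous_pvDensity δ).intervalIntegrable _ _)
  rw [fourier_pvKernel_zero, sub_zero] at hftc
  rw [← hftc, ← intervalIntegral.integral_Iic_sub_Iic hI.integrableOn hI.integrableOn,
    integral_Iic_zero_pvDensity hδ, sub_zero]

end Kernel

section Superposition

lemma integral_corr_mul_pvKernel (v : Amb) (g : Fin 3 → 𝓢(V2, ℂ)) {δ : ℝ} (hδ : 0 < δ) :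
    ∫ t, corr v (fun j => g j) t * pvKernel δ t =
      ∫ ξ, freqProd g ξ * ∫ a in Iic (normalFunctional v ξ), pvDensity δ a := by
  have hk : Integrable fun t => (pvKernel δ t : ℂ) := (integrable_pvKernel hδ).ofReal
  have hphase : Continuous fun z : ℝ × (V2 × V2) => 𝐞 (-(z.1 * normalFunctional v z.2)) :=
    Real.continuous_fourierChar.comp
      (continuous_fst.mul ((continuous_normalFunctional v).comp continuous_snd)).neg
  have hint : Integrable (Function.uncurry fun (t : ℝ) (ξ : V2 × V2) =>
      𝐞 (-(t * normalFunctional v ξ)) • (pvKernel δ t * freqProd g ξ)) :=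
    (hk.mul_prod (integrable_freqProd g)).mono
      (hphase.aestronglyMeasurable.smul
        (hk.mul_prod (integrable_freqProd g)).aestronglyMeasurable)
      (.of_forall fun z => (Circle.norm_smul _ _).le)
  calc ∫ t, corr v (fun j => g j) t * pvKernel δ t
      = ∫ t, ∫ ξ, 𝐞 (-(t * normalFunctional v ξ)) • (pvKernel δ t * freqProd g ξ) := by
        simp only [corr_eq_integral_freqProd, ← integral_mul_const, smul_mul_assoc,
          normalFunctional_apply, mul_comm (freqProd g _)]
    _ = ∫ ξ, ∫ t, 𝐞 (-(t * normalFunctional v ξ)) • (pvKernel δ t * freqProd g ξ) :=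
        integral_integral_swap hint
    _ = _ := by
        simp only [← fourier_pvKernel hδ, Real.fourier_real_eq, mul_comm (freqProd g _),
          ← integral_mul_const, smul_mul_assoc]

lemma exists_integral_Iic_normalFunctional_eq (v : Amb) : ∃ e : V2 × V2, ∀ (δ : ℝ), 0 < δ → ∀ ξ,
    ∫ a in Iic (normalFunctional v ξ), pvDensity δ a =
      ∫ a in {a : ℝ | ξ + a • e ∈ halfSpace v}, pvDensity δ a := by
  by_cases hv : normalFunctional v = 0
  · refine ⟨0, fun δ hδ ξ => ?_⟩
    simp [hv, halfSpace, integral_Iic_zero_pvDensity hδ]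
  · obtain ⟨e, he⟩ := (normalFunctional v).surjective hv (-1)
    refine ⟨e, fun δ _ ξ => ?_⟩
    have hset : {a : ℝ | ξ + a • e ∈ halfSpace v} = Iio (normalFunctional v ξ) := by
      ext a
      simp [halfSpace, he]
    rw [hset, integral_Iic_eq_integral_Iio]

lemma integrable_pvDensity_mul_freqProd_indicator (v : Amb) (e : V2 × V2) (g : Fin 3 → 𝓢(V2, ℂ))
    {δ : ℝ} (hδ : 0 < δ) :
    Integrable (Function.uncurry fun (a : ℝ) (ξ : V2 × V2) =>
      pvDensity δ a * ((· + a • e) ⁻¹' halfSpace v).indicator (freqProd g) ξ) := by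
  have hS : MeasurableSet {z : ℝ × (V2 × V2) | z.2 + z.1 • e ∈ halfSpace v} :=
    (continuous_snd.add (continuous_fst.smul continuous_const)).measurable
      (measurableSet_halfSpace v)
  refine (((integrable_pvDensity hδ).mul_prod (integrable_freqProd g)).indicator hS).congr
    (.of_forall fun z => ?_)
  exact indicator_mul_right _ (fun z : ℝ × (V2 × V2) => pvDensity δ z.1) (fun z => freqProd g z.2)

lemma integral_pvDensity_mul_freqProd_indicator (v : Amb) (e : V2 × V2) (g : Fin 3 → 𝓢(V2, ℂ))
    (δ a : ℝ) :
    ∫ ξ, pvDensity δ a * ((· + a • e) ⁻¹' halfSpace v).indicator (freqProd g) ξ =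
      pvDensity δ a * multForm ((· + a • e) ⁻¹' halfSpace v) g := by
  rw [integral_const_mul, multForm_apply,
    integral_indicator (measurable_add_const (a • e) (measurableSet_halfSpace v))]

lemma integrable_pvDensity_mul_multForm (v : Amb) (e : V2 × V2) (g : Fin 3 → 𝓢(V2, ℂ))
    {δ : ℝ} (hδ : 0 < δ) :
    Integrable fun a => pvDensity δ a * multForm ((· + a • e) ⁻¹' halfSpace v) g := by
  simpa only [Function.uncurry_apply_pair, integral_pvDensity_mul_freqProd_indicator] using
    (integrable_pvDensity_mul_freqProd_indicator v e g hδ).integral_prod_left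

lemma exists_integral_corr_mul_pvKernel_eq (v : Amb) : ∃ e : V2 × V2, ∀ (δ : ℝ), 0 < δ →
    ∀ g : Fin 3 → 𝓢(V2, ℂ), ∫ t, corr v (fun j => g j) t * pvKernel δ t =
      ∫ a, pvDensity δ a * multForm ((· + a • e) ⁻¹' halfSpace v) g := by
  obtain ⟨e, he⟩ := exists_integral_Iic_normalFunctional_eq v
  refine ⟨e, fun δ hδ g => ?_⟩
  have hS (ξ : V2 × V2) : MeasurableSet {a : ℝ | ξ + a • e ∈ halfSpace v} :=
    (measurable_id.smul_const e).const_add ξ (measurableSet_halfSpace v)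
  have hξ (ξ : V2 × V2) : freqProd g ξ * ∫ a in {a : ℝ | ξ + a • e ∈ halfSpace v}, pvDensity δ a =
      ∫ a, pvDensity δ a * ((· + a • e) ⁻¹' halfSpace v).indicator (freqProd g) ξ := by
    rw [← integral_indicator (hS ξ), ← integral_const_mul]
    refine integral_congr_ae (.of_forall fun a => ?_)
    by_cases ha : ξ + a • e ∈ halfSpace v <;> simp [ha, mul_comm]
  simp only [integral_corr_mul_pvKernel v g hδ, he δ hδ, hξ,
    ← integral_pvDensity_mul_freqProd_indicator]
  exact (integral_integral_swap (integrable_pvDensity_mul_freqProd_indicator v e g hδ)).symm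

variable {ι : Type*} [Fintype ι] {p : Fin 3 → ℝ} {K : ℝ≥0∞}

theorem SquareBound.integral_corr_mul_pvKernel {v : ι → Amb}
    (h : SquareBound p K fun n => multForm (halfSpace (v n))) {δ : ℝ} (hδ : 0 < δ) :
    SquareBound p (ENNReal.ofReal (4 * Real.pi) * K)
      fun n g => ∫ t, corr (v n) (fun j => g j) t * pvKernel δ t := by
  intro g
  choose e he using fun n => exists_integral_corr_mul_pvKernel_eq (v n)
  simp only [he _ δ hδ]
  calc ∑ n, ‖∫ a, pvDensity δ a *
          multForm ((· + a • e n) ⁻¹' halfSpace (v n)) fun j => g j n‖ₑ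
      ≤ ∑ n, ∫⁻ a, ‖pvDensity δ a *
          multForm ((· + a • e n) ⁻¹' halfSpace (v n)) fun j => g j n‖ₑ :=
        Finset.sum_le_sum fun n _ => enorm_integral_le_lintegral_enorm _
    _ = ∫⁻ a, ‖pvDensity δ a‖ₑ *
          ∑ n, ‖multForm ((· + a • e n) ⁻¹' halfSpace (v n)) fun j => g j n‖ₑ := by
        rw [← lintegral_finsetSum' _ fun n _ => (integrable_pvDensity_mul_multForm (v n) (e n)
          (fun j => g j n) hδ).aestronglyMeasurable.enorm]
        simp only [enorm_mul, Finset.mul_sum]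
    _ ≤ ∫⁻ a, ‖pvDensity δ a‖ₑ *
          (K * ∏ j, eLpNorm (sqFun fun n => ⇑(g j n)) (ENNReal.ofReal (p j)) volume) := by
        gcongr with a
        exact h.multForm_preimage_add (fun n => a • e n) g
    _ ≤ _ := by
        rw [lintegral_mul_const _ (by fun_prop), mul_assoc]
        gcongr
        exact lintegral_enorm_pvDensity_le hδ

end Superposition

section DominatedConvergence

variable {α E ι : Type*} [NormedAddCommGroup E] [Fintype ι]

lemma sqFun_le_of_norm_le {f : ι → α → E} {B : α → ℝ} {x : α} (h : ∀ n, ‖f n x‖ ≤ B x)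
    (hB : 0 ≤ B x) : sqFun f x ≤ √(Fintype.card ι) * B x := by
  rw [← Real.sqrt_sq hB, ← Real.sqrt_mul (Nat.cast_nonneg _)]
  refine Real.sqrt_le_sqrt ?_
  calc ∑ n, ‖f n x‖ ^ 2 ≤ ∑ _n : ι, B x ^ 2 := by
        gcongr with n
        exact h n
    _ = Fintype.card ι * B x ^ 2 := by
        rw [Finset.sum_const, Finset.card_univ, nsmul_eq_mul]

variable [MeasurableSpace α] {μ : Measure α}

lemma aestronglyMeasurable_sqFun {f : ι → α → E} (hf : ∀ n, AEStronglyMeasurable (f n) μ) :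
    AEStronglyMeasurable (sqFun f) μ :=
  Real.continuous_sqrt.comp_aestronglyMeasurable
    (Finset.aestronglyMeasurable_fun_sum _ fun n _ => (hf n).norm.pow 2)

theorem tendsto_eLpNorm_of_dominated {p : ℝ} (hp : 0 < p) {F : ℕ → α → E} {f : α → E} {B : α → ℝ}
    (hF : ∀ k, AEStronglyMeasurable (F k) μ) (hB : MemLp B (ENNReal.ofReal p) μ)
    (hFB : ∀ k, ∀ᵐ x ∂μ, ‖F k x‖ ≤ B x)
    (hlim : ∀ᵐ x ∂μ, Tendsto (fun k => F k x) atTop (𝓝 (f x))) :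
    Tendsto (fun k => eLpNorm (F k) (ENNReal.ofReal p) μ) atTop
      (𝓝 (eLpNorm f (ENNReal.ofReal p) μ)) := by
  have hB' : ∫⁻ x, ‖B x‖ₑ ^ p ∂μ ≠ ⊤ := by
    simpa only [ENNReal.toReal_ofReal hp.le] using
      (lintegral_rpow_enorm_lt_top_of_eLpNorm_lt_top (by simpa using hp) ENNReal.ofReal_ne_top
        hB.eLpNorm_lt_top).ne
  simp only [eLpNorm_ofReal_eq_lintegral_rpow hp]
  refine (ENNReal.continuous_rpow_const.tendsto _).comp
    (tendsto_lintegral_of_dominated_convergence' _ (fun k => (hF k).enorm.pow_const p)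
      (fun k => ?_) hB' ?_)
  · filter_upwards [hFB k] with x hx
    gcongr
    exact enorm_le_iff_norm_le.2 (hx.trans (le_abs_self _))
  · filter_upwards [hlim] with x hx
    exact (ENNReal.continuous_rpow_const.tendsto _).comp hx.enorm

variable {B : α → ℝ} {q : ℝ≥0∞}

lemma memLp_sqFun {f : ι → α → E} (hf : ∀ n, AEStronglyMeasurable (f n) μ) (hB : MemLp B q μ)
    (hB0 : 0 ≤ B) (hfB : ∀ n x, ‖f n x‖ ≤ B x) : MemLp (sqFun f) q μ := by
  refine (hB.const_mul √(Fintype.card ι)).mono' (aestronglyMeasurable_sqFun hf)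
    (.of_forall fun x => ?_)
  rw [Real.norm_of_nonneg (sqFun_nonneg f x)]
  exact sqFun_le_of_norm_le (hfB · x) (hB0 x)

lemma tendsto_eLpNorm_sqFun {p : ℝ} (hp : 0 < p) {f : ι → α → E} {g : ℕ → ι → α → E}
    (hg : ∀ k n, AEStronglyMeasurable (g k n) μ) (hB : MemLp B (ENNReal.ofReal p) μ) (hB0 : 0 ≤ B)
    (hgB : ∀ k n x, ‖g k n x‖ ≤ B x)
    (hlim : ∀ n, ∀ᵐ x ∂μ, Tendsto (fun k => g k n x) atTop (𝓝 (f n x))) :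
    Tendsto (fun k => eLpNorm (sqFun (g k)) (ENNReal.ofReal p) μ) atTop
      (𝓝 (eLpNorm (sqFun f) (ENNReal.ofReal p) μ)) := by
  refine tendsto_eLpNorm_of_dominated hp (fun k => aestronglyMeasurable_sqFun (hg k))
    (hB.const_mul √(Fintype.card ι)) (fun k => .of_forall fun x => ?_) ?_
  · rw [Real.norm_of_nonneg (sqFun_nonneg _ x)]
    exact sqFun_le_of_norm_le (hgB k · x) (hB0 x)
  · filter_upwards [ae_all_iff.2 hlim] with x hx
    exact (Real.continuous_sqrt.tendsto _).comp
      (tendsto_finsetSum _ fun n _ => (hx n).norm.pow 2)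

end DominatedConvergence

section Mollification

variable {E F : Type*} [NormedAddCommGroup E]

/-- The function equal to `M` on the closed ball of radius `R` about the origin and to `0`
elsewhere: a common majorant of bounded functions supported in a fixed ball. -/
def ballBound (M R : ℝ) : E → ℝ := (Metric.closedBall 0 R).indicator fun _ => M

variable {M R r : ℝ}

lemma ballBound_nonneg (hM : 0 ≤ M) (x : E) : 0 ≤ ballBound M R x :=
  indicator_nonneg (fun _ _ => hM) x

lemma ballBound_le (hM : 0 ≤ M) (x : E) : ballBound M R x ≤ M :=
  indicator_le_self' (fun _ _ => hM) x

lemma ballBound_le_of_dist_le (hM : 0 ≤ M) {x y : E} (hyx : dist y x ≤ r) :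
    ballBound M R y ≤ ballBound M (R + r) x := by
  by_cases hy : y ∈ Metric.closedBall 0 R
  · have hx : x ∈ Metric.closedBall 0 (R + r) := by
      rw [Metric.mem_closedBall'] at hy ⊢
      exact (dist_triangle 0 y x).trans (add_le_add hy hyx)
    rw [ballBound, ballBound, indicator_of_mem hy, indicator_of_mem hx]
  · rw [ballBound, indicator_of_notMem hy]
    exact ballBound_nonneg hM x

variable [NormedAddCommGroup F]

lemma exists_norm_le_ballBound {κ : Type*} [Finite κ] {f : κ → E → F}
    (hb : ∀ k, ∃ M : ℝ, ∀ x, ‖f k x‖ ≤ M) (hs : ∀ k, HasCompactSupport (f k)) :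
    ∃ M R : ℝ, 0 ≤ M ∧ ∀ k x, ‖f k x‖ ≤ ballBound M R x := by
  choose m hm using hb
  obtain ⟨M, hM⟩ := (finite_range m).bddAbove
  obtain ⟨R, hR⟩ := (isCompact_iUnion fun k => (hs k).isCompact).isBounded.subset_closedBall 0
  refine ⟨max M 0, R, le_max_right _ _, fun k x => le_indicator_apply (fun _ => ?_) fun hx => ?_⟩
  · exact ((hm k x).trans (hM ⟨k, rfl⟩)).trans (le_max_left _ _)
  · rw [image_eq_zero_of_notMem_tsupport fun h => hx (hR (mem_iUnion_of_mem k h)), norm_zero]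

lemma hasCompactSupport_of_norm_le_ballBound [ProperSpace E] {f : E → F}
    (hf : ∀ x, ‖f x‖ ≤ ballBound M R x) : HasCompactSupport f := by
  refine .intro (isCompact_closedBall 0 R) fun x hx => norm_le_zero_iff.1 ?_
  simpa only [ballBound, indicator_of_notMem hx] using hf x

variable [MeasurableSpace E] [BorelSpace E] {μ : Measure E}

lemma memLp_ballBound [ProperSpace E] [IsFiniteMeasureOnCompacts μ] (M R : ℝ) (p : ℝ≥0∞) :
    MemLp (ballBound M R : E → ℝ) p μ :=
  memLp_indicator_const p measurableSet_closedBall M (.inr measure_closedBall_lt_top.ne)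

lemma integrable_ballBound [ProperSpace E] [IsFiniteMeasureOnCompacts μ] (M R : ℝ) :
    Integrable (ballBound M R : E → ℝ) μ :=
  memLp_one_iff_integrable.1 (memLp_ballBound M R 1)

variable [NormedSpace ℝ E] [FiniteDimensional ℝ E] [μ.IsAddHaarMeasure] [NormedSpace ℝ F]
  [CompleteSpace F]

/-- Smooth bump functions whose supports shrink to the origin, used as mollifiers. -/
def shrinkingBump (E : Type*) [NormedAddCommGroup E] (k : ℕ) : ContDiffBump (0 : E) where
  rIn := 1 / ((k : ℝ) + 1) / 2
  rOut := 1 / ((k : ℝ) + 1)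
  rIn_pos := by positivity
  rIn_lt_rOut := half_lt_self (by positivity)

lemma norm_convolution_shrinkingBump_le {f : E → F} (hM : 0 ≤ M) (hf : AEStronglyMeasurable f μ)
    (hfb : ∀ x, ‖f x‖ ≤ ballBound M R x) (k : ℕ) (x : E) :
    ‖convolution ((shrinkingBump E k).normed μ) f (.lsmul ℝ ℝ) μ x‖ ≤ ballBound M (R + 1) x := by
  have hr : (shrinkingBump E k).rOut ≤ 1 := by
    rw [shrinkingBump, div_le_one (by positivity)]
    exact le_add_of_nonneg_left k.cast_nonneg
  rw [← dist_zero_right]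
  refine dist_convolution_le (ballBound_nonneg hM x)
    (shrinkingBump E k).support_normed_eq.subset (shrinkingBump E k).nonneg_normed
    (shrinkingBump E k).integral_normed hf fun y hy => ?_
  rw [dist_zero_right]
  exact (hfb y).trans (ballBound_le_of_dist_le hM ((Metric.mem_ball.1 hy).le.trans hr))

theorem exists_schwartz_tendsto_ae {f : E → F} (hM : 0 ≤ M)
    (hf : AEStronglyMeasurable f μ) (hfb : ∀ x, ‖f x‖ ≤ ballBound M R x) :
    ∃ g : ℕ → 𝓢(E, F), (∀ k x, ‖g k x‖ ≤ ballBound M (R + 1) x) ∧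
      ∀ᵐ x ∂μ, Tendsto (fun k => g k x) atTop (𝓝 (f x)) := by
  have hloc : LocallyIntegrable f μ :=
    ((integrable_ballBound M R).mono' hf (.of_forall hfb)).locallyIntegrable
  have hbound := norm_convolution_shrinkingBump_le hM hf hfb
  refine ⟨fun k => (hasCompactSupport_of_norm_le_ballBound (hbound k)).toSchwartzMap
    ((shrinkingBump E k).hasCompactSupport_normed.contDiff_convolution_left _
      (shrinkingBump E k).contDiff_normed hloc), hbound,
    ContDiffBump.ae_convolution_tendsto_right_of_locallyIntegrable (K := 2)
      tendsto_one_div_add_atTop_nhds_zero_nat (.of_forall fun k => ?_) hloc⟩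
  simp only [shrinkingBump]
  linarith

end Mollification

section CorrelationLimits

variable {M R : ℝ} (v : Amb)

lemma stronglyMeasurable_corr {f : Fin 3 → V2 → ℂ} (hf : ∀ j, Measurable (f j)) :
    StronglyMeasurable (corr v f) := by
  refine StronglyMeasurable.integral_prod_right (f := fun (t : ℝ) (x : V2) =>
    ∏ j, f j (x - t • comp3 v j)) (Measurable.stronglyMeasurable ?_)
  simp only [Function.uncurry_def]
  fun_prop

lemma norm_prod_comp_sub_le {f : Fin 3 → V2 → ℂ} (hM : 0 ≤ M)
    (hfb : ∀ j x, ‖f j x‖ ≤ ballBound M R x) (a : Fin 3 → V2) (x : V2) :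
    ‖∏ j, f j (x - a j)‖ ≤ ballBound M R (x - a 0) * (M * M) := by
  have hfM (j : Fin 3) (y : V2) : ‖f j y‖ ≤ M := (hfb j y).trans (ballBound_le hM y)
  rw [Fin.prod_univ_three, mul_assoc, norm_mul, norm_mul]
  gcongr
  · exact ballBound_nonneg hM _
  · exact hfb 0 _
  · exact hfM 1 _
  · exact hfM 2 _

lemma norm_corr_le {f : Fin 3 → V2 → ℂ} (hM : 0 ≤ M)
    (hfb : ∀ j x, ‖f j x‖ ≤ ballBound M R x) (t : ℝ) :
    ‖corr v f t‖ ≤ (∫ x : V2, ballBound M R x) * (M * M) := by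
  rw [← integral_sub_right_eq_self _ (t • comp3 v 0), ← integral_mul_const]
  exact norm_integral_le_of_norm_le (((integrable_ballBound M R).comp_sub_right _).mul_const _)
    (.of_forall fun x => norm_prod_comp_sub_le hM hfb (fun j => t • comp3 v j) x)

variable {f : Fin 3 → V2 → ℂ} {g : ℕ → Fin 3 → V2 → ℂ}

lemma tendsto_corr (hM : 0 ≤ M) (hg : ∀ k j, Measurable (g k j))
    (hgb : ∀ k j x, ‖g k j x‖ ≤ ballBound M R x)
    (hlim : ∀ j, ∀ᵐ x, Tendsto (fun k => g k j x) atTop (𝓝 (f j x))) (t : ℝ) :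
    Tendsto (fun k => corr v (g k) t) atTop (𝓝 (corr v f t)) := by
  refine tendsto_integral_of_dominated_convergence _
    (fun k => Measurable.aestronglyMeasurable (by have := hg k; fun_prop))
    (((integrable_ballBound M R).comp_sub_right (t • comp3 v 0)).mul_const (M * M))
    (fun k => .of_forall fun x => norm_prod_comp_sub_le hM (hgb k) (fun j => t • comp3 v j) x) ?_
  have hlim' (j : Fin 3) := (measurePreserving_sub_right volume
    (t • comp3 v j)).quasiMeasurePreserving.ae (hlim j)
  filter_upwards [ae_all_iff.2 hlim'] with x hx
  exact tendsto_finsetProd _ fun j _ => hx j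

lemma tendsto_integral_corr_mul_pvKernel (hM : 0 ≤ M) (hg : ∀ k j, Measurable (g k j))
    (hgb : ∀ k j x, ‖g k j x‖ ≤ ballBound M R x)
    (hlim : ∀ j, ∀ᵐ x, Tendsto (fun k => g k j x) atTop (𝓝 (f j x))) {δ : ℝ} (hδ : 0 < δ) :
    Tendsto (fun k => ∫ t, corr v (g k) t * pvKernel δ t) atTop
      (𝓝 (∫ t, corr v f t * pvKernel δ t)) := by
  refine tendsto_integral_of_dominated_convergence _
    (fun k => (stronglyMeasurable_corr v (hg k)).aestronglyMeasurable.mul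
      (integrable_pvKernel hδ).ofReal.aestronglyMeasurable)
    ((integrable_pvKernel hδ).norm.const_mul ((∫ x : V2, ballBound M R x) * (M * M)))
    (fun k => .of_forall fun t => ?_)
    (.of_forall fun t => (tendsto_corr v hM hg hgb hlim t).mul_const _)
  rw [norm_mul, Complex.norm_real]
  gcongr
  exact norm_corr_le v hM (hgb k) t

variable {ι : Type*} [Fintype ι] {p : Fin 3 → ℝ} {K : ℝ≥0∞}

theorem SquareBound.sum_enorm_integral_corr_mul_pvKernel_le (hp : ∀ j, 0 < p j) {δ : ℝ}
    (hδ : 0 < δ) (hK : K ≠ ⊤) {v : ι → Amb}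
    (h : SquareBound p K fun n g => ∫ t, corr (v n) (fun j => g j) t * pvKernel δ t)
    {f : Fin 3 → ι → V2 → ℂ} (hf : ∀ j n, Measurable (f j n))
    (hfb : ∀ j n, ∃ M : ℝ, ∀ x, ‖f j n x‖ ≤ M) (hfs : ∀ j n, HasCompactSupport (f j n)) :
    ∑ n, ‖∫ t, corr (v n) (fun j => f j n) t * pvKernel δ t‖ₑ ≤
      K * ∏ j, eLpNorm (sqFun (f j)) (ENNReal.ofReal (p j)) volume := by
  obtain ⟨M, R, hM, hfMR⟩ := exists_norm_le_ballBound (f := fun k : Fin 3 × ι => f k.1 k.2)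
    (fun k => hfb k.1 k.2) fun k => hfs k.1 k.2
  choose g hgb hlim using fun j n =>
    exists_schwartz_tendsto_ae (μ := volume) hM (hf j n).aestronglyMeasurable (hfMR (j, n))
  have hgm (j n k) : Measurable (g j n k) := (g j n k).continuous.measurable
  have hleft := tendsto_finsetSum Finset.univ fun n _ =>
    (tendsto_integral_corr_mul_pvKernel (v n) hM (fun k j => hgm j n k) (fun k j => hgb j n k)
      (fun j => hlim j n) hδ).enorm
  have hright := ENNReal.tendsto_finsetProd_of_ne_top Finset.univ
    (fun j _ => tendsto_eLpNorm_sqFun (hp j) (fun k n => (hgm j n k).aestronglyMeasurable)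
      (memLp_ballBound M (R + 1) _) (ballBound_nonneg hM) (fun k n => hgb j n k) (hlim j))
    fun j _ => (memLp_sqFun (fun n => (hf j n).aestronglyMeasurable) (memLp_ballBound M R _)
      (ballBound_nonneg hM) fun n => hfMR (j, n)).eLpNorm_ne_top
  exact le_of_tendsto_of_tendsto' hleft (ENNReal.Tendsto.const_mul hright (.inr hK))
    fun k => h fun j n => g j n k

end CorrelationLimits

section Averaging

/-- The weight with which the sharp truncation of `1 / t` to `s < |t| < 1 / s` enters the smooth
truncation `pvKernel δ`: the derivative of `s ↦ cauchyBump δ⁻¹ s - cauchyBump δ s`. -/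
def pvWeight (δ s : ℝ) : ℝ :=
  2 * s / δ ^ 2 * cauchyBump δ s ^ 2 - 2 * s * δ ^ 2 * cauchyBump δ⁻¹ s ^ 2

@[fun_prop]
lemma continuous_pvWeight (δ : ℝ) : Continuous (pvWeight δ) := by
  unfold pvWeight; fun_prop

lemma hasDerivAt_cauchyBump (c s : ℝ) :
    HasDerivAt (cauchyBump c) (-(2 * s / c ^ 2 * cauchyBump c s ^ 2)) s := by
  have h : HasDerivAt (fun s : ℝ => 1 + (s / c) ^ 2) (2 * s / c ^ 2) s := by
    refine ((((hasDerivAt_id' s).div_const c).pow 2).const_add 1).congr_deriv ?_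
    ring
  refine (h.inv (by positivity)).congr_deriv ?_
  unfold cauchyBump
  field_simp

lemma hasDerivAt_cauchyBump_sub (δ s : ℝ) :
    HasDerivAt (fun s => cauchyBump δ⁻¹ s - cauchyBump δ s) (pvWeight δ s) s := by
  refine ((hasDerivAt_cauchyBump δ⁻¹ s).sub (hasDerivAt_cauchyBump δ s)).congr_deriv ?_
  simp only [pvWeight, inv_pow, div_inv_eq_mul]
  ring

lemma integral_pvWeight (δ : ℝ) {a : ℝ} (ha : 0 ≤ a) :
    ∫ s in Ioo 0 a, pvWeight δ s = cauchyBump δ⁻¹ a - cauchyBump δ a := by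
  rw [← integral_Ioc_eq_integral_Ioo, ← intervalIntegral.integral_of_le ha,
    intervalIntegral.integral_eq_sub_of_hasDerivAt (fun s _ => hasDerivAt_cauchyBump_sub δ s)
      ((continuous_pvWeight δ).intervalIntegrable _ _)]
  simp [cauchyBump]

lemma pvWeight_nonneg {δ s : ℝ} (hδ : δ ∈ Ioo (0 : ℝ) 1) (hs : s ∈ Ioo (0 : ℝ) 1) :
    0 ≤ pvWeight δ s := by
  obtain ⟨hδ0, hδ1⟩ := hδ
  obtain ⟨hs0, hs1⟩ := hs
  have hfactor : pvWeight δ s =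
      2 * s * δ ^ 2 * ((δ ^ 2 + s ^ 2)⁻¹ ^ 2 - (1 + δ ^ 2 * s ^ 2)⁻¹ ^ 2) := by
    unfold pvWeight cauchyBump
    field_simp
  have hle : δ ^ 2 + s ^ 2 ≤ 1 + δ ^ 2 * s ^ 2 := by
    nlinarith [pow_le_one₀ hδ0.le hδ1.le (n := 2), pow_le_one₀ hs0.le hs1.le (n := 2)]
  rw [hfactor]
  refine mul_nonneg (by positivity) (sub_nonneg.2 ?_)
  gcongr

lemma pvWeight_le {δ s : ℝ} (hδ : 0 < δ) (hs : 0 < s) : pvWeight δ s ≤ 2 * δ ^ 2 / s ^ 3 := by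
  have hbump : cauchyBump δ s ≤ δ ^ 2 / s ^ 2 := by
    rw [cauchyBump, inv_le_comm₀ (by positivity) (by positivity), inv_div, div_pow]
    exact le_add_of_nonneg_left zero_le_one
  have hnonneg : 0 ≤ cauchyBump δ s := by
    unfold cauchyBump
    positivity
  calc pvWeight δ s ≤ 2 * s / δ ^ 2 * cauchyBump δ s ^ 2 := sub_le_self _ (by positivity)
    _ ≤ 2 * s / δ ^ 2 * (δ ^ 2 / s ^ 2) ^ 2 := by gcongr
    _ = 2 * δ ^ 2 / s ^ 3 := by field_simp

lemma cauchyBump_abs (c t : ℝ) : cauchyBump c |t| = cauchyBump c t := by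
  simp only [cauchyBump, div_pow, sq_abs]

/-- This invariance is the reason for using Cauchy bumps: it makes `pvKernel δ` an average of the
truncations of `1 / t` to the sets `s < |t| < 1 / s`, which are invariant under `t ↦ 1 / t`. -/
lemma cauchyBump_sub_inv {δ t : ℝ} (hδ : δ ≠ 0) (ht : t ≠ 0) :
    cauchyBump δ⁻¹ t⁻¹ - cauchyBump δ t⁻¹ = cauchyBump δ⁻¹ t - cauchyBump δ t := by
  unfold cauchyBump
  field_simp
  ring

/-- The set `s < |t| < 1 / s` to which the principal-value integral is truncated. -/
def truncSet (s : ℝ) : Set ℝ := {t | s < |t| ∧ |t| < s⁻¹}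

lemma measurableSet_prod_truncSet : MeasurableSet {z : ℝ × ℝ | z.1 ∈ truncSet z.2} :=
  (measurableSet_lt (by fun_prop : Measurable fun z : ℝ × ℝ => z.2) (by fun_prop)).inter
    (measurableSet_lt (by fun_prop : Measurable fun z : ℝ × ℝ => |z.1|) (by fun_prop))

lemma measurableSet_truncSet (s : ℝ) : MeasurableSet (truncSet s) :=
  measurable_prodMk_right measurableSet_prod_truncSet

lemma mem_truncSet_iff {s t : ℝ} (hs : 0 < s) (ht : t ≠ 0) :
    t ∈ truncSet s ↔ s ∈ Ioo 0 (min |t| |t|⁻¹) := by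
  simp only [truncSet, mem_ofPred_eq, mem_Ioo, hs, true_and, lt_min_iff,
    lt_inv_comm₀ (abs_pos.2 ht) hs]

lemma min_abs_inv_abs_le_one (t : ℝ) : min |t| |t|⁻¹ ≤ 1 := by
  rcases le_total |t| 1 with h | h
  · exact min_le_of_left_le h
  · exact min_le_of_right_le (inv_le_one_of_one_le₀ h)

lemma integral_indicator_truncSet_pvWeight {δ t : ℝ} (hδ : δ ≠ 0) (ht : t ≠ 0) :
    ∫ s in Ioo 0 1, (truncSet s).indicator (fun _ => pvWeight δ s) t =
      cauchyBump δ⁻¹ t - cauchyBump δ t := by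
  have hset : ∀ s ∈ Ioo (0 : ℝ) 1, (truncSet s).indicator (fun _ => pvWeight δ s) t =
      (Ioo 0 (min |t| |t|⁻¹)).indicator (pvWeight δ) s := fun s hs => by
    classical simp only [indicator_apply, mem_truncSet_iff hs.1 ht]
  rw [setIntegral_congr_fun measurableSet_Ioo hset, setIntegral_indicator measurableSet_Ioo,
    Ioo_inter_Ioo, max_self, min_eq_right (min_abs_inv_abs_le_one t),
    integral_pvWeight δ (by positivity)]
  rcases min_choice |t| |t|⁻¹ with h | h <;> rw [h]
  · rw [cauchyBump_abs, cauchyBump_abs]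
  · rw [cauchyBump_sub_inv hδ (abs_ne_zero.2 ht), cauchyBump_abs, cauchyBump_abs]

lemma indicator_truncSet_pvWeight_nonneg {δ s : ℝ} (hδ : δ ∈ Ioo (0 : ℝ) 1)
    (hs : s ∈ Ioo (0 : ℝ) 1) (t : ℝ) : 0 ≤ (truncSet s).indicator (fun _ => pvWeight δ s) t :=
  indicator_nonneg (fun _ _ => pvWeight_nonneg hδ hs) t

variable {E : Type*} [NormedAddCommGroup E] [NormedSpace ℝ E] {c : ℝ → E} {B : ℝ}

/-- The integral of `c t / t` over `s < |t| < 1 / s`. -/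
def truncIntegral (c : ℝ → E) (s : ℝ) : E := ∫ t in truncSet s, t⁻¹ • c t

lemma pvKernel_smul_eq {δ : ℝ} (t : ℝ) (x : E) :
    pvKernel δ t • x = (cauchyBump δ⁻¹ t - cauchyBump δ t) • t⁻¹ • x := by
  rw [pvKernel, div_eq_mul_inv, mul_smul]

lemma integral_norm_indicator_truncSet_smul {δ t : ℝ} (hδ : δ ∈ Ioo (0 : ℝ) 1) (ht : t ≠ 0) :
    ∫ s in Ioo 0 1, ‖(truncSet s).indicator (fun _ => pvWeight δ s) t • t⁻¹ • c t‖ =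
      ‖pvKernel δ t • c t‖ := by
  have hnonneg : 0 ≤ cauchyBump δ⁻¹ t - cauchyBump δ t := by
    rw [← integral_indicator_truncSet_pvWeight hδ.1.ne' ht]
    exact setIntegral_nonneg measurableSet_Ioo fun s hs =>
      indicator_truncSet_pvWeight_nonneg hδ hs t
  rw [pvKernel_smul_eq, norm_smul, Real.norm_of_nonneg hnonneg,
    ← integral_indicator_truncSet_pvWeight hδ.1.ne' ht, ← integral_mul_const]
  refine setIntegral_congr_fun measurableSet_Ioo fun s hs => ?_
  simp only [norm_smul, Real.norm_of_nonneg (indicator_truncSet_pvWeight_nonneg hδ hs t)]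

lemma integrableOn_indicator_truncSet_pvWeight (δ t : ℝ) :
    IntegrableOn (fun s => (truncSet s).indicator (fun _ => pvWeight δ s) t) (Ioo 0 1) :=
  (((continuous_pvWeight δ).continuousOn.integrableOn_Icc).mono_set Ioo_subset_Icc_self).indicator
    (measurable_prodMk_left measurableSet_prod_truncSet : MeasurableSet {s | t ∈ truncSet s})

lemma integrable_indicator_truncSet_smul (hc : StronglyMeasurable c) (hB : ∀ t, ‖c t‖ ≤ B)
    {δ : ℝ} (hδ : δ ∈ Ioo (0 : ℝ) 1) :
    Integrable (Function.uncurry fun t s : ℝ =>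
      (truncSet s).indicator (fun _ => pvWeight δ s) t • t⁻¹ • c t)
      (volume.prod (volume.restrict (Ioo 0 1))) := by
  have hweight : Measurable fun z : ℝ × ℝ =>
      (truncSet z.2).indicator (fun _ => pvWeight δ z.2) z.1 :=
    ((continuous_pvWeight δ).measurable.comp measurable_snd).indicator measurableSet_prod_truncSet
  have hmeas := hweight.stronglyMeasurable.smul
    (measurable_fst.inv.stronglyMeasurable.smul (hc.comp_measurable measurable_fst))
  refine (integrable_prod_iff hmeas.aestronglyMeasurable).2 ⟨.of_forall fun t => ?_, ?_⟩
  · exact (integrableOn_indicator_truncSet_pvWeight δ t).smul_const (t⁻¹ • c t)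
  · have hint : Integrable fun t => pvKernel δ t • c t :=
      (integrable_pvKernel hδ.1).smul_bdd B hc.aestronglyMeasurable (.of_forall hB)
    refine hint.norm.congr ?_
    filter_upwards [compl_mem_ae_iff.2 (measure_singleton (0 : ℝ))] with t ht
    exact (integral_norm_indicator_truncSet_smul hδ ht).symm

theorem integral_pvKernel_smul_eq_integral_truncIntegral [CompleteSpace E]
    (hc : StronglyMeasurable c) (hB : ∀ t, ‖c t‖ ≤ B) {δ : ℝ} (hδ : δ ∈ Ioo (0 : ℝ) 1) :
    ∫ t, pvKernel δ t • c t = ∫ s in Ioo 0 1, pvWeight δ s • truncIntegral c s := by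
  calc ∫ t, pvKernel δ t • c t
      = ∫ t, ∫ s in Ioo 0 1, (truncSet s).indicator (fun _ => pvWeight δ s) t • t⁻¹ • c t := by
        refine integral_congr_ae ?_
        filter_upwards [compl_mem_ae_iff.2 (measure_singleton (0 : ℝ))] with t ht
        rw [integral_smul_const, integral_indicator_truncSet_pvWeight hδ.1.ne' ht,
          pvKernel_smul_eq]
    _ = ∫ s in Ioo 0 1, ∫ t, (truncSet s).indicator (fun _ => pvWeight δ s) t • t⁻¹ • c t :=
        integral_integral_swap (integrable_indicator_truncSet_smul hc hB hδ)
    _ = ∫ s in Ioo 0 1, pvWeight δ s • truncIntegral c s := by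
        simp only [truncIntegral, ← integral_smul, ← integral_indicator (measurableSet_truncSet _),
          ← indicator_smul_left, indicator_const_smul]

lemma norm_truncIntegral_le (hB : ∀ t, ‖c t‖ ≤ B) {η s : ℝ} (hη : 0 < η) (hs : η ≤ s) :
    ‖truncIntegral c s‖ ≤ η⁻¹ * B * (2 * η⁻¹) := by
  have hB0 : 0 ≤ B := (norm_nonneg _).trans (hB 0)
  have hsub : truncSet s ⊆ Icc (-η⁻¹) η⁻¹ := fun t ht =>
    abs_le.1 (ht.2.le.trans (inv_anti₀ hη hs))
  have hvol : volume.real (truncSet s) ≤ 2 * η⁻¹ := by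
    refine (measureReal_mono hsub measure_Icc_lt_top.ne).trans_eq ?_
    rw [Real.volume_real_Icc_of_le (neg_le_self (by positivity))]
    ring
  refine (norm_setIntegral_le_of_norm_le_const ((measure_mono hsub).trans_lt measure_Icc_lt_top)
    fun t ht => ?_).trans (mul_le_mul_of_nonneg_left hvol (by positivity))
  rw [norm_smul, norm_inv, Real.norm_eq_abs]
  gcongr
  exacts [hs.trans ht.1.le, hB t]

lemma stronglyMeasurable_truncIntegral (hc : StronglyMeasurable c) :
    StronglyMeasurable (truncIntegral c) := by
  have hmeas : StronglyMeasurable ({z : ℝ × ℝ | z.1 ∈ truncSet z.2}.indicator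
      fun z => z.1⁻¹ • c z.1) :=
    (measurable_fst.inv.stronglyMeasurable.smul (hc.comp_measurable measurable_fst)).indicator
      measurableSet_prod_truncSet
  have heq : truncIntegral c = fun s => ∫ t, {z : ℝ × ℝ | z.1 ∈ truncSet z.2}.indicator
      (fun z => z.1⁻¹ • c z.1) (t, s) :=
    funext fun s => (integral_indicator (measurableSet_truncSet s)).symm
  rw [heq]
  exact hmeas.integral_prod_left'

lemma integrableOn_truncIntegral (hc : StronglyMeasurable c) (hB : ∀ t, ‖c t‖ ≤ B) {L : E}
    (hL : Tendsto (truncIntegral c) (𝓝[>] 0) (𝓝 L)) :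
    IntegrableOn (truncIntegral c) (Ioo 0 1) := by
  obtain ⟨η, hη, hnear⟩ := mem_nhdsGT_iff_exists_Ioo_subset.1
    (hL.norm.eventually (gt_mem_nhds (lt_add_one ‖L‖)))
  refine Measure.integrableOn_of_bounded (M := max (‖L‖ + 1) (η⁻¹ * B * (2 * η⁻¹)))
    measure_Ioo_lt_top.ne (stronglyMeasurable_truncIntegral hc).aestronglyMeasurable
    ((ae_restrict_iff' measurableSet_Ioo).2 (.of_forall fun s hs => ?_))
  rcases lt_or_ge s η with h | h
  · exact le_max_of_le_left (le_of_lt (hnear ⟨hs.1, h⟩))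
  · exact le_max_of_le_right (norm_truncIntegral_le hB hη h)

lemma tendsto_integral_pvWeight :
    Tendsto (fun δ => ∫ s in Ioo 0 1, pvWeight δ s) (𝓝[>] 0) (𝓝 1) := by
  have hcont : Continuous fun δ : ℝ => (1 - δ ^ 2) / (1 + δ ^ 2) :=
    Continuous.div (by fun_prop) (by fun_prop) fun δ => by positivity
  have hlim : Tendsto (fun δ : ℝ => (1 - δ ^ 2) / (1 + δ ^ 2)) (𝓝[>] 0) (𝓝 1) := by
    simpa using (hcont.tendsto 0).mono_left (nhdsWithin_le_nhds (s := Ioi 0))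
  refine hlim.congr' ?_
  filter_upwards [self_mem_nhdsWithin] with δ (hδ : 0 < δ)
  rw [integral_pvWeight δ zero_le_one, cauchyBump, cauchyBump]
  field_simp
  ring

lemma tendstoUniformlyOn_pvWeight {u : Set ℝ} (hu : u ∈ 𝓝 0) :
    TendstoUniformlyOn pvWeight 0 (𝓝[>] 0) (Ioo 0 1 \ u) := by
  obtain ⟨η, hη, hηu⟩ := Metric.mem_nhds_iff.1 hu
  have hlim : Tendsto (fun δ : ℝ => 2 * δ ^ 2 / η ^ 3) (𝓝[>] 0) (𝓝 0) := by
    have h : Continuous fun δ : ℝ => 2 * δ ^ 2 / η ^ 3 := by fun_prop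
    simpa using (h.tendsto 0).mono_left (nhdsWithin_le_nhds (s := Ioi 0))
  refine Metric.tendstoUniformlyOn_iff.2 fun ε hε => ?_
  filter_upwards [hlim.eventually (gt_mem_nhds hε), Ioo_mem_nhdsGT one_pos] with δ hδε hδ s hs
  have hηs : η ≤ s := by
    by_contra! h
    exact hs.2 (hηu (by simpa [abs_of_pos hs.1.1] using h))
  rw [Pi.zero_apply, dist_zero_left, Real.norm_of_nonneg (pvWeight_nonneg hδ hs.1)]
  calc pvWeight δ s ≤ 2 * δ ^ 2 / s ^ 3 := pvWeight_le hδ.1 hs.1.1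
    _ ≤ 2 * δ ^ 2 / η ^ 3 := by gcongr
    _ < ε := hδε

theorem tendsto_integral_pvKernel_smul [CompleteSpace E] (hc : StronglyMeasurable c)
    (hB : ∀ t, ‖c t‖ ≤ B) {L : E} (hL : Tendsto (truncIntegral c) (𝓝[>] 0) (𝓝 L)) :
    Tendsto (fun δ => ∫ t, pvKernel δ t • c t) (𝓝[>] 0) (𝓝 L) := by
  have h01 : ∀ᶠ δ : ℝ in 𝓝[>] 0, δ ∈ Ioo 0 1 := Ioo_mem_nhdsGT one_pos
  have hpeak : Tendsto (fun δ => ∫ s in Ioo 0 1, pvWeight δ s • truncIntegral c s) (𝓝[>] 0)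
      (𝓝 L) :=
    tendsto_setIntegral_peak_smul_of_integrableOn_of_tendsto measurableSet_Ioo
      measurableSet_Ioo Subset.rfl self_mem_nhdsWithin measure_Ioo_lt_top.ne
      (h01.mono fun δ hδ s hs => pvWeight_nonneg hδ hs)
      (fun u hu h0 => tendstoUniformlyOn_pvWeight (hu.mem_nhds h0)) tendsto_integral_pvWeight
      (.of_forall fun δ => (continuous_pvWeight δ).aestronglyMeasurable)
      (integrableOn_truncIntegral hc hB hL)
      (hL.mono_left (nhdsWithin_mono _ Ioo_subset_Ioi_self))
  exact hpeak.congr' (h01.mono fun δ hδ =>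
    (integral_pvKernel_smul_eq_integral_truncIntegral hc hB hδ).symm)

end Averaging

section PrincipalValue

variable {v : Amb} {f : Fin 3 → V2 → ℂ} {L : ℂ}

lemma truncPV_eq_truncIntegral_corr (v : Amb) (f : Fin 3 → V2 → ℂ) :
    truncPV v (f 0) (f 1) (f 2) = truncIntegral (corr v f) := by
  funext δ
  simp only [truncPV, truncIntegral, truncSet, corr, Fin.prod_univ_three, comp3, Matrix.cons_val,
    mul_assoc, div_eq_inv_mul, Complex.real_smul, Complex.ofReal_inv]

lemma HasPV.tendsto_integral_corr_mul_pvKernel (hL : HasPV v (f 0) (f 1) (f 2) L)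
    (hf : ∀ j, Measurable (f j)) (hfb : ∀ j, ∃ M : ℝ, ∀ x, ‖f j x‖ ≤ M)
    (hfs : ∀ j, HasCompactSupport (f j)) :
    Tendsto (fun δ => ∫ t, corr v f t * pvKernel δ t) (𝓝[>] 0) (𝓝 L) := by
  obtain ⟨M, R, hM, hfMR⟩ := exists_norm_le_ballBound hfb hfs
  have hL' : Tendsto (truncIntegral (corr v f)) (𝓝[>] 0) (𝓝 L) :=
    truncPV_eq_truncIntegral_corr v f ▸ hL
  simpa only [Complex.real_smul, mul_comm] using
    tendsto_integral_pvKernel_smul (stronglyMeasurable_corr v hf) (norm_corr_le v hM hfMR) hL'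

theorem SquareBound.sum_enorm_le_of_hasPV {ι : Type*} [Fintype ι] {p : Fin 3 → ℝ} {K : ℝ≥0∞}
    {v : ι → Amb} {f : Fin 3 → ι → V2 → ℂ} {L : ι → ℂ}
    (h : SquareBound p K fun n => multForm (halfSpace (v n))) (hp : ∀ j, 0 < p j) (hK : K ≠ ⊤)
    (hf : ∀ j n, Measurable (f j n)) (hfb : ∀ j n, ∃ M : ℝ, ∀ x, ‖f j n x‖ ≤ M)
    (hfs : ∀ j n, HasCompactSupport (f j n))
    (hL : ∀ n, HasPV (v n) (f 0 n) (f 1 n) (f 2 n) (L n)) :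
    ∑ n, ‖L n‖ₑ ≤ ENNReal.ofReal (4 * Real.pi) * K *
      ∏ j, eLpNorm (sqFun (f j)) (ENNReal.ofReal (p j)) volume := by
  have hlim := tendsto_finsetSum Finset.univ fun n _ =>
    (HasPV.tendsto_integral_corr_mul_pvKernel (f := fun j => f j n) (hL n) (fun j => hf j n)
      (fun j => hfb j n) fun j => hfs j n).enorm
  refine le_of_tendsto hlim ?_
  filter_upwards [self_mem_nhdsWithin] with δ (hδ : 0 < δ)
  exact SquareBound.sum_enorm_integral_corr_mul_pvKernel_le hp hδ
    (ENNReal.mul_ne_top ENNReal.ofReal_ne_top hK) (h.integral_corr_mul_pvKernel hδ) hf hfb hfs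

end PrincipalValue

/-- **Meyer-type square function estimate, part (a).** If `Λ_{D̃}` is bounded on
`L^{p₁} × L^{p₂} × L^{p₃}`, then for any points `ξ⃗ⁿ ∈ ∂D̃` with blow-up normal
vectors `v⃗ⁿ` one has the ℓ²-valued estimate for the directional principal-value
forms `Λ̃_{v⃗ⁿ}`, with a constant independent of `N`, of the points and of the
normal vectors. -/
theorem meyer_lemma_a (p : Fin 3 → ℝ) (hp : ∀ k, 0 < p k)
    (hsum : (p 0)⁻¹ + (p 1)⁻¹ + (p 2)⁻¹ = 1)
    (Dt : Set Amb) (hsub : Dt ⊆ Gamma) (hmeas : MeasurableSet Dt)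
    (C : ℝ)
    (hC : ∀ f1 f2 f3 : SchwartzMap V2 ℂ,
      ENNReal.ofReal ‖Lambda Dt ⇑f1 ⇑f2 ⇑f3‖ ≤ ENNReal.ofReal C *
        (eLpNorm (⇑f1) (ENNReal.ofReal (p 0)) volume *
          (eLpNorm (⇑f2) (ENNReal.ofReal (p 1)) volume *
            eLpNorm (⇑f3) (ENNReal.ofReal (p 2)) volume))) :
    ∃ C' : ℝ, ∀ (N : ℕ) (ξv vv : Fin N → Amb),
      (∀ n, ξv n ∈ bdry Dt) →
      (∀ n, BlowupNormal Dt (ξv n) (vv n)) →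
      ∀ (f : Fin 3 → Fin N → V2 → ℂ) (L : Fin N → ℂ),
        (∀ j n, Measurable (f j n)) →
        (∀ j n, ∃ M : ℝ, ∀ x, ‖f j n x‖ ≤ M) →
        (∀ j n, HasCompactSupport (f j n)) →
        (∀ n, HasPV (vv n) (f 0 n) (f 1 n) (f 2 n) (L n)) →
        ENNReal.ofReal (∑ n, ‖L n‖) ≤ ENNReal.ofReal C' *
          ∏ j : Fin 3, eLpNorm (fun x => Real.sqrt (∑ n, ‖f j n x‖ ^ 2))
            (ENNReal.ofReal (p j)) volume := by
  have hsum' : ∑ j, (p j)⁻¹ = 1 := by rw [Fin.sum_univ_three, hsum]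
  have hform (g : Fin 3 → 𝓢(V2, ℂ)) : ‖multForm (Phi ⁻¹' Dt) g‖ₑ ≤
      ENNReal.ofReal C * ∏ j, eLpNorm (g j) (ENNReal.ofReal (p j)) volume := by
    rw [← Lambda_eq_multForm hmeas, ← ofReal_norm, Fin.prod_univ_three, mul_assoc]
    exact hC (g 0) (g 1) (g 2)
  refine ⟨4 * Real.pi * (max C 0 * meyerConst p), fun N ξv vv hξ hv f L hf hfb hfs hL => ?_⟩
  choose b _ hb using hξ
  have hhalf : SquareBound p (ENNReal.ofReal C * ENNReal.ofReal (meyerConst p))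
      fun n => multForm (halfSpace (vv n)) :=
    (squareBound_of_bound hp hsum' _ hform).of_blowupNormal hmeas hp hsum' (b := b)
      fun n => (hb n).symm ▸ hv n
  have hmain := hhalf.sum_enorm_le_of_hasPV hp
    (ENNReal.mul_ne_top ENNReal.ofReal_ne_top ENNReal.ofReal_ne_top) hf hfb hfs hL
  rw [ENNReal.ofReal_sum_of_nonneg fun n _ => norm_nonneg (L n),
    ENNReal.ofReal_mul (by positivity), ENNReal.ofReal_mul (le_max_right _ _),
    ENNReal.ofReal_max, ENNReal.ofReal_zero, max_eq_left zero_le]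
  simpa only [ofReal_norm] using! hmain
end
end

section
/- Theorem (half-space forms outside the Banach triangle): Let v⃗ = (v1,v2,v3) ∈ Γ be nondegenerate, i.e. v1, v2, v3 are not all scalar multiples of one single vector of ℝ². Let (p1,p2,p3) be an admissible triple with p_i ≤ −1 for some i. Then the trilinear form Λ̃_{v⃗} is not of generalized restricted type (p1,p2,p3). -/
open MeasureTheory Filter Topology Set

noncomputable section

/-- A vector of `Γ` is degenerate if its three ℝ²-components are all scalar multiples
of one single vector. -/
def Degenerate (v : Amb) : Prop :=
  ∃ (u : V2) (c1 c2 c3 : ℝ), v.1 = c1 • u ∧ v.2.1 = c2 • u ∧ v.2.2 = c3 • u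

/-- Admissibility of an exponent triple, recorded through the reciprocals
`a k = 1/p k` (with `1/∞ = 0`): the condition `p k ∈ [1,∞] ∪ (−∞,−1]` is exactly
`a k ∈ [−1,1]`, at most one `p k` (equivalently `a k`) is negative, and
`1/p₁+1/p₂+1/p₃ = 1`. -/
def Admissible (a : Fin 3 → ℝ) : Prop :=
  (∀ k, -1 ≤ a k ∧ a k ≤ 1) ∧ (∀ k l, a k < 0 → a l < 0 → k = l) ∧
    a 0 + a 1 + a 2 = 1

/-- Generalized restricted type `(p₁,p₂,p₃)` (recorded through the reciprocals
`a k = 1/p k`) for a partially defined trilinear form, given as the relation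
`Lam f₁ f₂ f₃ z` ("`z` is the value of the form at `(f₁,f₂,f₃)`"). -/
def GenRestrictedType (Lam : (V2 → ℂ) → (V2 → ℂ) → (V2 → ℂ) → ℂ → Prop)
    (a : Fin 3 → ℝ) : Prop :=
  ∃ C : ℝ, ∀ E : Fin 3 → Set V2,
    (∀ k, MeasurableSet (E k)) → (∀ k, 0 < volume (E k)) → (∀ k, volume (E k) < ⊤) →
    ∃ j : Fin 3, (∀ k, a k < 0 → j = k) ∧
      ∃ Et : Set V2, MeasurableSet Et ∧ Et ⊆ E j ∧ volume (E j) ≤ 2 * volume Et ∧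
        ∀ f : Fin 3 → V2 → ℂ, (∀ k, Measurable (f k)) →
          (∀ k x, ‖f k x‖ ≤ Set.indicator (E k) (fun _ => (1 : ℝ)) x) →
          (∀ x, ‖f j x‖ ≤ Set.indicator Et (fun _ => (1 : ℝ)) x) →
          ∀ z : ℂ, Lam (f 0) (f 1) (f 2) z →
            ‖z‖ ≤ C * ((volume (E 0)).toReal ^ a 0 *
              ((volume (E 1)).toReal ^ a 1 * (volume (E 2)).toReal ^ a 2))

/-!
Since `vᵢ` is off the line through the other two vectors, some linear functional `φ` satisfies
`φ (vₖ - vᵢ) = 1` for both `k ≠ i`. Let `Eᵢ` be a bounded piece of `2 ≤ φ ≤ 4`, and let both other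
sets be the part of `|φ| ≤ δ` inside a large ball. For a major subset `T` of `Eᵢ`, the substitution
`x = q + t vᵢ` turns the inner integral at `t` into the measure of `T ∩ {|φ - t| ≤ δ}`. This is
nonnegative, is supported in `1 ≤ t ≤ 5`, and has integral `2δ|T|` by Fubini, so the form is at
least a constant times `δ`. The restricted type estimate bounds it by a constant times
`δ ^ ∑ k ≠ i, aₖ`, whose exponent `1 - aᵢ` exceeds `1`.
-/

open Metric

theorem affineIndependent_comp3 {v : Amb} (hvG : v ∈ Gamma) (hnd : ¬ Degenerate v) :
    AffineIndependent ℝ (comp3 v) := by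
  rw [affineIndependent_iff_not_collinear, collinear_iff_exists_forall_eq_smul_vadd]
  rintro ⟨p, u, hline⟩
  choose c hc using fun k => hline _ (mem_range_self (f := comp3 v) k)
  have hsum : comp3 v 0 + comp3 v 1 + comp3 v 2 = 0 := hvG
  have hp : p = -((c 0 + c 1 + c 2) / 3) • u := by
    simp only [hc, vadd_eq_add] at hsum
    have h3 : (3 : ℝ) • p = -(c 0 + c 1 + c 2) • u := by
      rw [← sub_eq_zero, ← hsum]
      module
    rw [← inv_smul_smul₀ (three_ne_zero (α := ℝ)) p, h3]
    module
  have hmul (k : Fin 3) : comp3 v k = (c k - (c 0 + c 1 + c 2) / 3) • u := by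
    rw [hc k, vadd_eq_add, hp]
    module
  exact hnd ⟨u, _, _, _, hmul 0, hmul 1, hmul 2⟩

theorem exists_dual_sub_eq_one {K V : Type*} [Field K] [AddCommGroup V] [Module K V]
    {s : Set V} (hs : s.Nonempty) {x : V} (hx : x ∉ affineSpan K s) :
    ∃ φ : Module.Dual K V, ∀ y ∈ s, φ (y - x) = 1 := by
  obtain ⟨y₀, hy₀⟩ := hs
  have hmem₀ : y₀ ∈ affineSpan K s := subset_affineSpan K s hy₀
  have hdir : y₀ - x ∉ (affineSpan K s).direction := fun h =>
    hx ((AffineSubspace.vsub_left_mem_direction_iff_mem hmem₀ x).1 h)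
  obtain ⟨φ, hφ, hker⟩ := Submodule.exists_dual_map_eq_bot_of_notMem hdir inferInstance
  refine ⟨(φ (y₀ - x))⁻¹ • φ, fun y hy => ?_⟩
  have hzero : φ (y - y₀) = 0 := by
    rw [← Submodule.mem_bot K, ← hker]
    exact Submodule.mem_map_of_mem
      (AffineSubspace.vsub_mem_direction (subset_affineSpan K s hy) hmem₀)
  have heq : φ (y - x) = φ (y₀ - x) := by
    rw [← sub_add_sub_cancel y y₀ x, map_add, hzero, zero_add]
  rw [LinearMap.smul_apply, heq, smul_eq_mul, inv_mul_cancel₀ hφ]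

section Slices

variable {α : Type*} {φ : α → ℝ} {T : Set α} {c r δ : ℝ}

theorem inter_preimage_closedBall_eq_empty (hTφ : T ⊆ φ ⁻¹' closedBall c r) {t : ℝ}
    (ht : t ∉ closedBall c (r + δ)) : T ∩ φ ⁻¹' closedBall t δ = ∅ := by
  refine eq_empty_of_forall_notMem fun q hq => ht ?_
  calc dist t c ≤ dist (φ q) c + dist (φ q) t := by
        rw [add_comm]; exact dist_triangle_left t c (φ q)
    _ ≤ r + δ := add_le_add (hTφ hq.1) hq.2

variable [MeasurableSpace α] {μ : Measure α}

theorem measurableSet_dist_le (hT : MeasurableSet T) (hφ : Measurable φ) (δ : ℝ) :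
    MeasurableSet {z : ℝ × α | z.2 ∈ T ∧ dist (φ z.2) z.1 ≤ δ} :=
  (measurable_snd hT).inter <| measurableSet_le
    ((hφ.comp measurable_snd).dist measurable_fst) measurable_const

theorem measurable_measure_inter_preimage_closedBall [SFinite μ] (hT : MeasurableSet T)
    (hφ : Measurable φ) (δ : ℝ) : Measurable fun t => μ (T ∩ φ ⁻¹' closedBall t δ) :=
  measurable_measure_prodMk_left (measurableSet_dist_le hT hφ δ)

theorem lintegral_measure_inter_preimage_closedBall [SFinite μ] (hT : MeasurableSet T)
    (hφ : Measurable φ) (δ : ℝ) :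
    ∫⁻ t, μ (T ∩ φ ⁻¹' closedBall t δ) = ENNReal.ofReal (2 * δ) * μ T := by
  have hH := measurableSet_dist_le hT hφ δ
  have hfiber (q : α) : volume ((fun t : ℝ => (t, q)) ⁻¹'
      {z : ℝ × α | z.2 ∈ T ∧ dist (φ z.2) z.1 ≤ δ}) =
        T.indicator (fun _ => ENNReal.ofReal (2 * δ)) q := by
    by_cases hq : q ∈ T
    · simp [hq, dist_comm (φ q), ← Real.volume_closedBall (φ q) δ, closedBall]
    · simp [hq]
  calc ∫⁻ t, μ (T ∩ φ ⁻¹' closedBall t δ)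
      = (volume.prod μ) {z : ℝ × α | z.2 ∈ T ∧ dist (φ z.2) z.1 ≤ δ} :=
        (Measure.prod_apply hH).symm
    _ = ENNReal.ofReal (2 * δ) * μ T := by
        rw [Measure.prod_apply_symm hH, lintegral_congr hfiber, lintegral_indicator_const hT]

theorem integrable_measureReal_inter_preimage_closedBall [SFinite μ] (hT : MeasurableSet T)
    (hT_fin : μ T ≠ ⊤) (hφ : Measurable φ) (δ : ℝ) :
    Integrable fun t => μ.real (T ∩ φ ⁻¹' closedBall t δ) := by
  refine integrable_toReal_of_lintegral_ne_top
    (measurable_measure_inter_preimage_closedBall hT hφ δ).aemeasurable ?_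
  rw [lintegral_measure_inter_preimage_closedBall hT hφ]
  exact ENNReal.mul_ne_top ENNReal.ofReal_ne_top hT_fin

theorem integral_measureReal_inter_preimage_closedBall [SFinite μ] (hT : MeasurableSet T)
    (hT_fin : μ T ≠ ⊤) (hφ : Measurable φ) (hδ : 0 ≤ δ) :
    ∫ t, μ.real (T ∩ φ ⁻¹' closedBall t δ) = 2 * δ * μ.real T := by
  have hslice_fin (t : ℝ) : μ (T ∩ φ ⁻¹' closedBall t δ) < ⊤ :=
    (measure_mono inter_subset_left).trans_lt hT_fin.lt_top
  simp only [Measure.real]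
  rw [integral_toReal (measurable_measure_inter_preimage_closedBall hT hφ δ).aemeasurable
      (ae_of_all _ hslice_fin),
    lintegral_measure_inter_preimage_closedBall hT hφ,
    ENNReal.toReal_ofReal_mul _ _ (by positivity)]

theorem le_integral_measureReal_inter_preimage_closedBall_div [SFinite μ]
    (hT : MeasurableSet T) (hT_fin : μ T ≠ ⊤) (hφ : Measurable φ)
    (hTφ : T ⊆ φ ⁻¹' closedBall c r) (hδ : 0 ≤ δ) (hc : r + δ < c) :
    2 * δ * μ.real T / (c + r + δ) ≤ ∫ t, μ.real (T ∩ φ ⁻¹' closedBall t δ) / t := by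
  set s : ℝ → ℝ := fun t => μ.real (T ∩ φ ⁻¹' closedBall t δ) with hs
  have hs_int : Integrable s :=
    integrable_measureReal_inter_preimage_closedBall hT hT_fin hφ δ
  have hs_integral : ∫ t, s t = 2 * δ * μ.real T :=
    integral_measureReal_inter_preimage_closedBall hT hT_fin hφ hδ
  have hs_zero {t : ℝ} (ht : t ∉ closedBall c (r + δ)) : s t = 0 := by
    simp [hs, inter_preimage_closedBall_eq_empty hTφ ht]
  have hbounds {t : ℝ} (ht : t ∈ closedBall c (r + δ)) : c - (r + δ) ≤ t ∧ t ≤ c + r + δ := by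
    rw [Real.closedBall_eq_Icc] at ht
    exact ⟨ht.1, by linarith [ht.2]⟩
  have hdiv_int : Integrable fun t => s t / t := by
    refine (hs_int.div_const (c - (r + δ))).mono'
      (hs_int.aemeasurable.div measurable_id.aemeasurable).aestronglyMeasurable
      (ae_of_all _ fun t => ?_)
    by_cases ht : t ∈ closedBall c (r + δ)
    · have ht_pos : 0 < t := by linarith [(hbounds ht).1]
      rw [Real.norm_of_nonneg (div_nonneg measureReal_nonneg ht_pos.le)]
      exact div_le_div_of_nonneg_left measureReal_nonneg (by linarith) (hbounds ht).1
    · simp [hs_zero ht]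
  calc 2 * δ * μ.real T / (c + r + δ) = ∫ t, s t / (c + r + δ) := by
        rw [integral_div, hs_integral]
    _ ≤ ∫ t, s t / t := by
        refine integral_mono (hs_int.div_const _) hdiv_int fun t => ?_
        by_cases ht : t ∈ closedBall c (r + δ)
        · exact div_le_div_of_nonneg_left measureReal_nonneg (by linarith [(hbounds ht).1])
            (hbounds ht).2
        · simp [hs_zero ht]

end Slices

section Plates

variable {E : Type*} [NormedAddCommGroup E] [NormedSpace ℝ E]

/-- The plate of half-thickness `δ` around the hyperplane `φ = c`, cut off at radius `R`. The
estimate is tested on plates of one functional. -/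
def plate (φ : StrongDual ℝ E) (c δ R : ℝ) : Set E :=
  φ ⁻¹' closedBall c δ ∩ closedBall 0 R

variable {φ : StrongDual ℝ E} {c r δ ρ L R : ℝ} {u : E}

theorem measurableSet_plate [MeasurableSpace E] [BorelSpace E] :
    MeasurableSet (plate φ c δ R) :=
  (φ.measurable measurableSet_closedBall).inter measurableSet_closedBall

theorem measure_plate_ne_top [ProperSpace E] [MeasurableSpace E] {μ : Measure E}
    [IsFiniteMeasureOnCompacts μ] : μ (plate φ c δ R) ≠ ⊤ :=
  measure_ne_top_of_subset inter_subset_right measure_closedBall_lt_top.ne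

theorem measure_plate_pos [MeasurableSpace E] {μ : Measure E} [μ.IsOpenPosMeasure]
    (hu : φ u = c) (huR : ‖u‖ < R) (hδ : 0 < δ) : 0 < μ (plate φ c δ R) := by
  refine Measure.measure_pos_of_mem_nhds μ (x := u) (inter_mem ?_ ?_)
  · exact φ.continuous.continuousAt.preimage_mem_nhds (hu ▸ closedBall_mem_nhds _ hδ)
  · exact closedBall_mem_nhds_of_mem (mem_ball_zero_iff.2 huR)

/-- The translates of the plate by `t • u`, `0 ≤ t ≤ 1`, lie in one ball, and each point of the ball
is covered for a set of `t` of length at most `2 * δ`; integrate over `t`. -/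
theorem measure_plate_zero_le [MeasurableSpace E] [BorelSpace E] {μ : Measure E} [SFinite μ]
    [μ.IsAddRightInvariant] (hu : φ u = 1) :
    μ (plate φ 0 δ R) ≤ ENNReal.ofReal (2 * δ) * μ (closedBall 0 (R + ‖u‖)) := by
  have htranslate {t : ℝ} (ht : t ∈ Icc (0 : ℝ) 1) :
      μ (plate φ 0 δ R) ≤ μ (closedBall 0 (R + ‖u‖) ∩ φ ⁻¹' closedBall t δ) := by
    rw [← measure_preimage_add_right μ (t • u) (closedBall 0 (R + ‖u‖) ∩ φ ⁻¹' closedBall t δ)]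
    refine measure_mono fun x hx => ⟨?_, ?_⟩
    · have htu : ‖t • u‖ ≤ ‖u‖ := by
        rw [norm_smul, Real.norm_of_nonneg ht.1]
        exact mul_le_of_le_one_left (norm_nonneg u) ht.2
      exact mem_closedBall_zero_iff.2
        (norm_add_le_of_le (mem_closedBall_zero_iff.1 hx.2) htu)
    · simpa [hu] using hx.1
  calc μ (plate φ 0 δ R) = ∫⁻ _ in Icc (0 : ℝ) 1, μ (plate φ 0 δ R) := by simp
    _ ≤ ∫⁻ t in Icc (0 : ℝ) 1, μ (closedBall 0 (R + ‖u‖) ∩ φ ⁻¹' closedBall t δ) :=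
        setLIntegral_mono' measurableSet_Icc fun _ ht => htranslate ht
    _ ≤ ∫⁻ t, μ (closedBall 0 (R + ‖u‖) ∩ φ ⁻¹' closedBall t δ) := setLIntegral_le_lintegral _ _
    _ = ENNReal.ofReal (2 * δ) * μ (closedBall 0 (R + ‖u‖)) :=
        lintegral_measure_inter_preimage_closedBall measurableSet_closedBall φ.measurable δ

theorem measureReal_plate_zero_le [ProperSpace E] [MeasurableSpace E] [BorelSpace E]
    {μ : Measure E} [IsFiniteMeasureOnCompacts μ] [μ.IsAddRightInvariant] (hu : φ u = 1)
    (hδ : 0 ≤ δ) :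
    μ.real (plate φ 0 δ R) ≤ 2 * δ * μ.real (closedBall 0 (R + ‖u‖)) := by
  have hle := ENNReal.toReal_mono
    (ENNReal.mul_ne_top ENNReal.ofReal_ne_top measure_closedBall_lt_top.ne)
    (measure_plate_zero_le (μ := μ) (δ := δ) (R := R) hu)
  rwa [ENNReal.toReal_ofReal_mul _ _ (by positivity)] at hle

theorem sub_smul_mem_plate_zero_iff (hu : φ u = 1) (huL : ‖u‖ ≤ L)
    (hR : ρ + (|c| + r + δ) * L ≤ R) {q : E} (hq : q ∈ plate φ c r ρ) (t : ℝ) :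
    q - t • u ∈ plate φ 0 δ R ↔ q ∈ φ ⁻¹' closedBall t δ := by
  have hφ : φ (q - t • u) = φ q - t := by simp [hu]
  simp only [plate, mem_inter_iff, mem_preimage, hφ, mem_closedBall, dist_zero_right,
    ← Real.norm_eq_abs, Real.dist_eq, and_iff_left_iff_imp]
  intro hqt
  have ht : |t| ≤ |c| + r + δ := by
    have h₁ : |φ q - c| ≤ r := hq.1
    have h₂ : |φ q - t| ≤ δ := hqt
    grind
  calc ‖q - t • u‖ ≤ ‖q‖ + |t| * ‖u‖ := by
        simpa only [norm_smul, Real.norm_eq_abs] using norm_sub_le q (t • u)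
    _ ≤ ρ + (|c| + r + δ) * L := by
        gcongr
        · exact mem_closedBall_zero_iff.1 hq.2
        · exact (abs_nonneg t).trans ht
    _ ≤ R := hR

theorem iInter_preimage_sub_smul_update_plate {ι : Type*} [DecidableEq ι] [Nontrivial ι]
    {w : ι → E} {i : ι} {T : Set E} (hw : ∀ k ≠ i, φ (w k - w i) = 1)
    (hL : ∀ k, ‖w k - w i‖ ≤ L) (hR : ρ + (|c| + r + δ) * L ≤ R) (hT : T ⊆ plate φ c r ρ)
    (t : ℝ) :
    ⋂ k, (fun x => x - t • w k) ⁻¹' Function.update (fun _ => plate φ 0 δ R) i T k =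
      (fun x => x - t • w i) ⁻¹' (T ∩ φ ⁻¹' closedBall t δ) := by
  ext x
  have hshift (k : ι) : x - t • w k = x - t • w i - t • (w k - w i) := by module
  have hother {k : ι} (hk : k ≠ i) (hx : x - t • w i ∈ T) :
      x - t • w k ∈ plate φ 0 δ R ↔ x - t • w i ∈ φ ⁻¹' closedBall t δ := by
    rw [hshift k, sub_smul_mem_plate_zero_iff (hw k hk) (hL k) hR (hT hx)]
  simp only [mem_iInter, mem_preimage (f := fun x => x - t • w _), mem_inter_iff]
  constructor
  · intro h
    obtain ⟨k, hk⟩ := exists_ne i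
    have hx : x - t • w i ∈ T := by simpa using h i
    exact ⟨hx, (hother hk hx).1 (by simpa [hk] using h k)⟩
  · rintro ⟨hx, hslice⟩ k
    obtain rfl | hk := eq_or_ne k i
    · simpa using hx
    · simpa [hk] using (hother hk hx).2 hslice

end Plates

section PrincipalValue

variable {v : Amb} {i : Fin 3} {φ : StrongDual ℝ V2} {T : Set V2} {c r δ ρ L R : ℝ}

/-- The inner integral of the truncated form `truncPV`, as a function of `t`. The three functions
are indexed by `Fin 3` so that the distinguished index `i` can be arbitrary. -/
def correlation (v : Amb) (f : Fin 3 → V2 → ℂ) (t : ℝ) : ℂ :=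
  ∫ x, ∏ k, f k (x - t • comp3 v k)

theorem truncPV_eq_setIntegral_correlation (v : Amb) (f : Fin 3 → V2 → ℂ) (δ : ℝ) :
    truncPV v (f 0) (f 1) (f 2) δ =
      ∫ t in {t : ℝ | δ < |t| ∧ |t| < δ⁻¹}, correlation v f t / t := by
  simp [truncPV, correlation, Fin.prod_univ_three, comp3, mul_assoc]

theorem correlation_indicator {F : Fin 3 → Set V2} (hF : ∀ k, MeasurableSet (F k)) (t : ℝ) :
    correlation v (fun k => (F k).indicator 1) t =
      volume.real (⋂ k, (fun x => x - t • comp3 v k) ⁻¹' F k) := by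
  have hmeas : MeasurableSet (⋂ k, (fun x => x - t • comp3 v k) ⁻¹' F k) :=
    .iInter fun k => (measurable_id.sub_const _) (hF k)
  have hprod : (fun x => ∏ k, (F k).indicator (1 : V2 → ℂ) (x - t • comp3 v k)) =
      (⋂ k, (fun x => x - t • comp3 v k) ⁻¹' F k).indicator fun _ => 1 := by
    classical
    ext x
    simp [indicator_apply, Finset.prod_boole]
  rw [correlation, hprod, integral_indicator_const _ hmeas]
  simp

theorem hasPV_integral_correlation {f : Fin 3 → V2 → ℂ} (hr : 0 < r)
    (hf : ∀ t, correlation v f t ≠ 0 → r ≤ |t| ∧ |t| ≤ R) :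
    HasPV v (f 0) (f 1) (f 2) (∫ t, correlation v f t / t) := by
  refine tendsto_const_nhds.congr' ?_
  filter_upwards [Ioo_mem_nhdsGT hr, tendsto_inv_nhdsGT_zero.eventually_gt_atTop R]
    with δ hδ hRδ
  rw [truncPV_eq_setIntegral_correlation]
  refine (setIntegral_eq_integral_of_forall_compl_eq_zero fun t ht => ?_).symm
  by_contra hne
  obtain ⟨hrt, htr⟩ := hf t fun h => hne (by rw [h, zero_div])
  exact ht ⟨hδ.2.trans_le hrt, htr.trans_lt hRδ⟩

theorem correlation_update_plate (hw : ∀ k ≠ i, φ (comp3 v k - comp3 v i) = 1)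
    (hL : ∀ k, ‖comp3 v k - comp3 v i‖ ≤ L) (hR : ρ + (|c| + r + δ) * L ≤ R)
    (hTm : MeasurableSet T) (hT : T ⊆ plate φ c r ρ) (t : ℝ) :
    correlation v
        (fun k => (Function.update (fun _ => plate φ 0 δ R) i T k).indicator 1) t =
      volume.real (T ∩ φ ⁻¹' closedBall t δ) := by
  have hmeas := (Function.forall_update_iff (fun _ => plate φ 0 δ R) (a := i) (b := T)
    (p := fun _ S => MeasurableSet S)).2 ⟨hTm, fun _ _ => measurableSet_plate⟩
  rw [correlation_indicator hmeas, iInter_preimage_sub_smul_update_plate hw hL hR hT,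
    measureReal_def, measureReal_def]
  simp_rw [sub_eq_add_neg]
  rw [measure_preimage_add_right]

theorem exists_hasPV_update_plate (hw : ∀ k ≠ i, φ (comp3 v k - comp3 v i) = 1)
    (hL : ∀ k, ‖comp3 v k - comp3 v i‖ ≤ L) (hR : ρ + (|c| + r + δ) * L ≤ R)
    (hTm : MeasurableSet T) (hT : T ⊆ plate φ c r ρ) (hδ : 0 ≤ δ) (hc : r + δ < c) :
    let f := fun k =>
      (Function.update (fun _ => plate φ 0 δ R) i T k).indicator (1 : V2 → ℂ)
    ∃ z, HasPV v (f 0) (f 1) (f 2) z ∧ 2 * δ * volume.real T / (c + r + δ) ≤ ‖z‖ := by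
  intro f
  have hTφ : T ⊆ φ ⁻¹' closedBall c r := hT.trans inter_subset_left
  have hcorr := correlation_update_plate hw hL hR hTm hT
  refine ⟨_, hasPV_integral_correlation (sub_pos.2 hc) (R := c + (r + δ)) fun t ht => ?_, ?_⟩
  · have ht_mem : t ∈ closedBall c (r + δ) := by
      contrapose! ht
      rw [hcorr, inter_preimage_closedBall_eq_empty hTφ ht]
      simp
    rw [Real.closedBall_eq_Icc] at ht_mem
    rw [abs_of_pos ((sub_pos.2 hc).trans_le ht_mem.1)]
    exact ht_mem
  · have hlow := le_integral_measureReal_inter_preimage_closedBall_div (μ := volume) hTm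
      (measure_ne_top_of_subset hT measure_plate_ne_top) φ.measurable hTφ hδ hc
    simp only [f, hcorr, ← Complex.ofReal_div]
    rw [integral_complex_ofReal, Complex.norm_real]
    exact hlow.trans (le_abs_self _)

end PrincipalValue

section RestrictedType

variable {v : Amb} {a : Fin 3 → ℝ} {i : Fin 3} {φ : StrongDual ℝ V2} {c r ρ L R : ℝ}
  {Lam : (V2 → ℂ) → (V2 → ℂ) → (V2 → ℂ) → ℂ → Prop}

theorem Admissible.one_lt_sum_compl (ha : Admissible a) (hai : a i < 0) : 1 < ∑ k ∈ {i}ᶜ, a k := by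
  have hsum : ∑ k, a k = 1 := by rw [Fin.sum_univ_three, ha.2.2]
  rw [Fintype.sum_eq_add_sum_compl i] at hsum
  linarith

theorem GenRestrictedType.exists_norm_le (h : GenRestrictedType Lam a) (hai : a i < 0) :
    ∃ C : ℝ, ∀ E : Fin 3 → Set V2,
      (∀ k, MeasurableSet (E k)) → (∀ k, 0 < volume (E k)) → (∀ k, volume (E k) ≠ ⊤) →
      ∃ T ⊆ E i, MeasurableSet T ∧ volume.real (E i) ≤ 2 * volume.real T ∧
        let f := fun k => (Function.update E i T k).indicator (1 : V2 → ℂ)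
        ∀ z, Lam (f 0) (f 1) (f 2) z → ‖z‖ ≤ C * ∏ k, volume.real (E k) ^ a k := by
  obtain ⟨C, hC⟩ := h
  refine ⟨C, fun E hE hE_pos hE_fin => ?_⟩
  obtain ⟨j, hj, T, hTm, hTE, hE_le, hbound⟩ := hC E hE hE_pos fun k => (hE_fin k).lt_top
  obtain rfl := hj i hai
  have hT_fin : volume T ≠ ⊤ := measure_ne_top_of_subset hTE (hE_fin j)
  have hnorm (S : Set V2) (x : V2) :
      ‖S.indicator (1 : V2 → ℂ) x‖ = S.indicator (fun _ => (1 : ℝ)) x := by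
    simp [norm_indicator_eq_indicator_norm]
  have hsub := (Function.forall_update_iff E (a := j) (b := T)
    (p := fun k S => S ⊆ E k)).2 ⟨hTE, fun _ _ => subset_rfl⟩
  have hmeas := (Function.forall_update_iff E (a := j) (b := T)
    (p := fun _ S => MeasurableSet S)).2 ⟨hTm, fun k _ => hE k⟩
  refine ⟨T, hTE, hTm, ?_, fun z hz => ?_⟩
  · simpa [measureReal_def] using
      ENNReal.toReal_mono (ENNReal.mul_ne_top ENNReal.ofNat_ne_top hT_fin) hE_le
  · rw [Fin.prod_univ_three, mul_assoc]
    refine hbound (fun k => (Function.update E j T k).indicator 1)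
      (fun k => measurable_const.indicator (hmeas k)) (fun k x => ?_) (fun x => ?_) z hz
    · rw [hnorm]
      exact indicator_le_indicator_of_subset (hsub k) (fun _ => zero_le_one) x
    · simp [hnorm]

theorem prod_update_const_rpow {ι β : Type*} [Fintype ι] [DecidableEq ι] (g : β → ℝ) (i : ι)
    (x : β) {y : β} (hy : 0 < g y) (a : ι → ℝ) :
    ∏ k, g (Function.update (fun _ => y) i x k) ^ a k =
      g x ^ a i * g y ^ ∑ k ∈ {i}ᶜ, a k := by
  rw [Fintype.prod_eq_mul_prod_compl i, Function.update_self, Real.rpow_sum_of_pos hy]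
  congr 1
  refine Finset.prod_congr rfl fun k hk => ?_
  rw [Function.update_of_ne (by simpa using hk)]

theorem GenRestrictedType.exists_norm_le_update_const
    (h : GenRestrictedType Lam a) (hai : a i < 0) :
    ∃ C : ℝ, ∀ P Q : Set V2, MeasurableSet P → MeasurableSet Q → 0 < volume P → 0 < volume Q →
      volume P ≠ ⊤ → volume Q ≠ ⊤ →
      ∃ T ⊆ P, MeasurableSet T ∧ volume.real P ≤ 2 * volume.real T ∧
        let f := fun k => (Function.update (fun _ => Q) i T k).indicator (1 : V2 → ℂ)
        ∀ z, Lam (f 0) (f 1) (f 2) z →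
          ‖z‖ ≤ C * (volume.real P ^ a i * volume.real Q ^ ∑ k ∈ {i}ᶜ, a k) := by
  obtain ⟨C, hC⟩ := h.exists_norm_le hai
  refine ⟨C, fun P Q hP hQ hP_pos hQ_pos hP_fin hQ_fin => ?_⟩
  have forall_update (p : Set V2 → Prop) (hpP : p P) (hpQ : p Q) (k : Fin 3) :
      p (Function.update (fun _ => Q) i P k) :=
    (Function.forall_update_iff (fun _ => Q) (p := fun _ => p)).2 ⟨hpP, fun _ _ => hpQ⟩ k
  have hC' := hC (Function.update (fun _ => Q) i P) (forall_update _ hP hQ)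
    (forall_update (0 < volume ·) hP_pos hQ_pos) (forall_update (volume · ≠ ⊤) hP_fin hQ_fin)
  simpa only [Function.update_self, Function.update_idem,
    prod_update_const_rpow volume.real i P (ENNReal.toReal_pos hQ_pos.ne' hQ_fin)] using hC'

theorem eventually_mul_rpow_lt_mul {A s : ℝ} (hA : 0 < A) (hs : 1 < s) (B : ℝ) :
    ∀ᶠ δ in 𝓝[>] (0 : ℝ), B * δ ^ s < A * δ := by
  have hlim : Tendsto (fun δ : ℝ => B * δ ^ (s - 1)) (𝓝[>] 0) (𝓝 0) := by
    have h := (Real.continuousAt_rpow_const 0 (s - 1) (Or.inr (by linarith))).const_mul B |>.tendsto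
    rw [Real.zero_rpow (by linarith), mul_zero] at h
    exact h.mono_left nhdsWithin_le_nhds
  filter_upwards [hlim.eventually_lt_const hA, self_mem_nhdsWithin] with δ hδ hδ_pos
  calc B * δ ^ s = B * δ ^ (s - 1) * δ := by
        rw [mul_assoc, ← Real.rpow_add_one (ne_of_gt hδ_pos), sub_add_cancel]
    _ < A * δ := mul_lt_mul_of_pos_right hδ hδ_pos

theorem GenRestrictedType.exists_mul_measureReal_plate_le (h : GenRestrictedType (HasPV v) a)
    (hai : a i < 0) (hw : ∀ k ≠ i, φ (comp3 v k - comp3 v i) = 1)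
    (hL : ∀ k, ‖comp3 v k - comp3 v i‖ ≤ L) (hP : 0 < volume (plate φ c r ρ)) (hR_pos : 0 < R) :
    ∃ C, ∀ δ > 0, r + δ < c → ρ + (|c| + r + δ) * L ≤ R →
      δ * volume.real (plate φ c r ρ) / (c + r + δ) ≤
        C * (volume.real (plate φ c r ρ) ^ a i *
          volume.real (plate φ 0 δ R) ^ ∑ k ∈ {i}ᶜ, a k) := by
  obtain ⟨C, hC⟩ := h.exists_norm_le_update_const hai
  refine ⟨C, fun δ hδ hc hR => ?_⟩
  have hQ : 0 < volume (plate φ 0 δ R) :=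
    measure_plate_pos (map_zero φ) (norm_zero.trans_lt hR_pos) hδ
  obtain ⟨T, hTP, hTm, hT_half, hbound⟩ := hC _ _ measurableSet_plate measurableSet_plate hP hQ
    measure_plate_ne_top measure_plate_ne_top
  obtain ⟨z, hz, hz_low⟩ := exists_hasPV_update_plate hw hL hR hTm hTP hδ.le hc
  have hden : 0 ≤ c + r + δ := by
    obtain ⟨q, hq⟩ := nonempty_of_measure_ne_zero hP.ne'
    have hr : 0 ≤ r := dist_nonneg.trans hq.1
    linarith
  calc δ * volume.real (plate φ c r ρ) / (c + r + δ)
      ≤ 2 * δ * volume.real T / (c + r + δ) := by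
        gcongr ?_ / _
        linarith [mul_le_mul_of_nonneg_left hT_half hδ.le]
    _ ≤ ‖z‖ := hz_low
    _ ≤ _ := hbound z hz

theorem GenRestrictedType.exists_mul_le_mul_rpow (h : GenRestrictedType (HasPV v) a)
    (hai : a i < 0) (hsum : 0 ≤ ∑ k ∈ {i}ᶜ, a k)
    (hw : ∀ k ≠ i, φ (comp3 v k - comp3 v i) = 1) :
    ∃ A > 0, ∃ B, ∀ δ ∈ Ioo (0 : ℝ) 1, A * δ ≤ B * δ ^ ∑ k ∈ {i}ᶜ, a k := by
  obtain ⟨j, hj⟩ := exists_ne i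
  set σ := ∑ k ∈ {i}ᶜ, a k
  set u := comp3 v j - comp3 v i
  obtain ⟨L, hL⟩ := (finite_range fun k => ‖comp3 v k - comp3 v i‖).bddAbove
  replace hL (k : Fin 3) : ‖comp3 v k - comp3 v i‖ ≤ L := hL (mem_range_self k)
  have hL_nonneg : 0 ≤ L := (norm_nonneg _).trans (hL i)
  set ρ := ‖(3 : ℝ) • u‖ + 1
  set R := ρ + 5 * L with hR_def
  set m := volume.real (plate φ 3 1 ρ)
  set V := volume.real (closedBall (0 : V2) (R + ‖u‖))
  have hP : 0 < volume (plate φ 3 1 ρ) :=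
    measure_plate_pos (u := (3 : ℝ) • u) (by simp [u, hw j hj]) (lt_add_one _) one_pos
  have hm : 0 < m := ENNReal.toReal_pos hP.ne' measure_plate_ne_top
  obtain ⟨C, hC⟩ := h.exists_mul_measureReal_plate_le hai hw hL hP (R := R) (by positivity)
  refine ⟨m / 5, by positivity, |C| * (m ^ a i * (2 * V) ^ σ), fun δ ⟨hδ_pos, hδ_lt⟩ => ?_⟩
  have hR : ρ + (|3| + 1 + δ) * L ≤ R := by
    rw [Nat.abs_ofNat, hR_def]
    gcongr
    linarith
  calc m / 5 * δ = δ * m / 5 := by ring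
    _ ≤ δ * m / (3 + 1 + δ) := by gcongr; linarith
    _ ≤ C * (m ^ a i * volume.real (plate φ 0 δ R) ^ σ) := hC δ hδ_pos (by linarith) hR
    _ ≤ |C| * (m ^ a i * (2 * δ * V) ^ σ) := by
        gcongr
        · exact le_abs_self C
        · exact measureReal_plate_zero_le (hw j hj) hδ_pos.le
    _ = |C| * (m ^ a i * (2 * V) ^ σ) * δ ^ σ := by
        rw [mul_right_comm 2 δ, Real.mul_rpow (by positivity) hδ_pos.le]
        ring

end RestrictedType

theorem halfspace_outside_banach_general (v : Amb) (i : Fin 3)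
    (hv : comp3 v i ∉ affineSpan ℝ (comp3 v '' {i}ᶜ)) (a : Fin 3 → ℝ) (hai : a i < 0)
    (hsum : 1 < ∑ k ∈ {i}ᶜ, a k) : ¬ GenRestrictedType (HasPV v) a := by
  intro h
  have hne : (comp3 v '' {i}ᶜ).Nonempty := (nonempty_compl_of_nontrivial i).image _
  obtain ⟨φ, hφ⟩ := exists_dual_sub_eq_one hne hv
  obtain ⟨A, hA, B, hAB⟩ := h.exists_mul_le_mul_rpow hai (zero_le_one.trans hsum.le)
    (φ := φ.toContinuousLinearMap) fun k hk => hφ _ (mem_image_of_mem _ hk)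
  obtain ⟨δ, hlt, hδ⟩ :=
    ((eventually_mul_rpow_lt_mul hA hsum B).and (Ioo_mem_nhdsGT one_pos)).exists
  exact (hAB δ hδ).not_gt hlt

/-- **Theorem (half-space forms outside the Banach triangle).**  For a nondegenerate
`v⃗ ∈ Γ` and an admissible triple with some `p_i ≤ −1` (i.e. `a i = 1/p_i < 0`), the
principal-value form `Λ̃_{v⃗}` is not of generalized restricted type `(p₁,p₂,p₃)`. -/
theorem halfspace_outside_banach (v : Amb) (hvG : v ∈ Gamma)
    (hnd : ¬ Degenerate v)
    (a : Fin 3 → ℝ) (hadm : Admissible a) (i : Fin 3) (hai : a i < 0) :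
    ¬ GenRestrictedType (fun f1 f2 f3 z => HasPV v f1 f2 f3 z) a := by
  have hind := affineIndependent_comp3 hvG hnd
  exact halfspace_outside_banach_general v i
    (compl_eq_univ_sdiff {i} ▸ hind.notMem_affineSpan_sdiff i univ) a hai
    (hadm.one_lt_sum_compl hai)
end
end
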